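/- For every real number c with 8/9 ≤ c < 1, one has limsup_{x→∞} T_c(x)/π(x) ≤ 8(1/c − 1); equivalently, for every ε > 0 there exists x₀ such that for all x ≥ x₀, T_c(x) ≤ (8(1/c − 1) + ε)·π(x). -/

import Mathlib

open Real Finset

attribute [local instance] Classical.propDecidable

/-- `Pplus n` is the largest prime factor of `n`, with the convention `Pplus 1 = 1`. -/
noncomputable def Pplus (n : ℕ) : ℕ := if n = 1 then 1 else n.primeFactors.sup id

/-- `primePi x` is the number of primes not exceeding `x`. -/
noncomputable def primePi (x : ℝ) : ℕ :=
  ((Finset.range (⌊x⌋₊ + 1)).filter Nat.Prime).card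

/-- `T c x = #{p ≤ x : p prime, P⁺(p-1) ≥ p^c}`. -/
noncomputable def T (c x : ℝ) : ℕ :=
  ((Finset.range (⌊x⌋₊ + 1)).filter
    (fun p : ℕ => p.Prime ∧ (p : ℝ) ^ c ≤ (Pplus (p - 1) : ℝ))).card

section SelbergAbstract

lemma alt_sum_between (S R U : Finset ℕ) (hU : U ⊆ S) (hR : R ⊆ S) :
    ∑ T ∈ S.powerset, (if R ⊆ T ∧ T ⊆ U then (-1 : ℝ) ^ T.card else 0)
      = if R = U then (-1 : ℝ) ^ R.card else 0 := by
  by_cases hRU : R ⊆ U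
  · have h1 : ∑ T ∈ S.powerset, (if R ⊆ T ∧ T ⊆ U then (-1 : ℝ) ^ T.card else 0)
        = ∑ V ∈ (U \ R).powerset, (-1 : ℝ) ^ R.card * (-1 : ℝ) ^ V.card := by
      rw [← Finset.sum_filter]
      refine Finset.sum_bij' (fun T _ => T \ R) (fun V _ => R ∪ V) ?_ ?_ ?_ ?_ ?_
      · intro T hT
        simp only [Finset.mem_filter, Finset.mem_powerset] at hT ⊢
        exact Finset.sdiff_subset_sdiff hT.2.2 (le_refl _)
      · intro V hV
        simp only [Finset.mem_filter, Finset.mem_powerset] at hV ⊢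
        have hV2 : V ⊆ U := hV.trans Finset.sdiff_subset
        exact ⟨Finset.union_subset hR (hV2.trans hU), Finset.subset_union_left,
          Finset.union_subset hRU hV2⟩
      · intro T hT
        simp only [Finset.mem_filter, Finset.mem_powerset] at hT
        exact Finset.union_sdiff_of_subset hT.2.1
      · intro V hV
        simp only [Finset.mem_powerset] at hV
        have : Disjoint R V := Finset.disjoint_of_subset_right hV Finset.disjoint_sdiff
        rw [Finset.union_sdiff_left, Finset.sdiff_eq_self_of_disjoint this.symm]
      · intro T hT
        simp only [Finset.mem_filter, Finset.mem_powerset] at hT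
        rw [← pow_add, ← Finset.card_sdiff_add_card_eq_card hT.2.1, add_comm]
    rw [h1, ← Finset.mul_sum]
    have h2 : ∑ V ∈ (U \ R).powerset, (-1 : ℝ) ^ V.card = if U \ R = ∅ then 1 else 0 := by
      have := Finset.sum_powerset_neg_one_pow_card (x := U \ R)
      exact_mod_cast this
    rw [h2]
    by_cases h : R = U
    · simp [h]
    · have : ¬ (U \ R = ∅) := by
        rw [Finset.sdiff_eq_empty_iff_subset]
        exact fun h' => h (Finset.Subset.antisymm hRU h')
      simp [h, this]
  · rw [if_neg (by rintro rfl; exact hRU (le_refl _))]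
    apply Finset.sum_eq_zero
    intro T _
    rw [if_neg]
    rintro ⟨h1, h2⟩
    exact hRU (h1.trans h2)

/-- Abstract Selberg weights. -/
lemma selberg_weights (S : Finset ℕ) (ν g : ℕ → ℝ) (hν0 : ∀ p ∈ S, 0 < ν p)
    (hν1 : ∀ p ∈ S, ν p < 1) (hg : ∀ p ∈ S, g p = ν p / (1 - ν p))
    (D : Finset ℕ → Prop) [DecidablePred D] (hD0 : D ∅) (hDmono : ∀ U V, U ⊆ V → V ⊆ S → D V → D U)
    (G : ℝ) (hG : G = ∑ U ∈ S.powerset, if D U then ∏ p ∈ U, g p else 0) :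
    ∃ l : Finset ℕ → ℝ, l ∅ = 1 ∧ (∀ T ∈ S.powerset, ¬ D T → l T = 0) ∧
      (∀ T ∈ S.powerset, |l T| ≤ 1) ∧
      ∑ T ∈ S.powerset, ∑ T' ∈ S.powerset, l T * l T' * ∏ p ∈ T ∪ T', ν p = 1 / G := by
  have hgpos : ∀ p ∈ S, 0 < g p := fun p hp => by
    rw [hg p hp]; exact div_pos (hν0 p hp) (by linarith [hν1 p hp])
  have hgU : ∀ U ⊆ S, 0 < ∏ p ∈ U, g p := fun U hU =>
    Finset.prod_pos fun p hp => hgpos p (hU hp)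
  have hνU : ∀ U ⊆ S, 0 < ∏ p ∈ U, ν p := fun U hU =>
    Finset.prod_pos fun p hp => hν0 p (hU hp)
  set a : Finset ℕ → ℝ := fun U => if D U then ∏ p ∈ U, g p else 0 with ha
  have ha0 : ∀ U ⊆ S, 0 ≤ a U := fun U hU => by
    simp only [ha]; split_ifs
    · exact (hgU U hU).le
    · exact le_refl _
  have hGpos : 0 < G := by
    rw [hG]
    refine Finset.sum_pos' (fun U hU => ha0 U (Finset.mem_powerset.1 hU)) ⟨∅, by simp, ?_⟩
    simp [hD0]
  set b : Finset ℕ → ℝ := fun T => ∑ U ∈ S.powerset, if T ⊆ U then a U else 0 with hb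
  have hb0 : ∀ T, 0 ≤ b T := fun T => Finset.sum_nonneg fun U hU => by
    split_ifs
    · exact ha0 U (Finset.mem_powerset.1 hU)
    · exact le_refl _
  refine ⟨fun T => (-1) ^ T.card / ((∏ p ∈ T, ν p) * G) * b T, ?_, ?_, ?_, ?_⟩
  · have : b ∅ = G := by rw [hG]; simp [hb, ha]
    simp [this, hGpos.ne']
  · intro T hT hDT
    have : b T = 0 := by
      apply Finset.sum_eq_zero
      intro U hU
      split_ifs with h
      · simp only [ha]
        rw [if_neg]
        exact fun hDU => hDT (hDmono T U h (Finset.mem_powerset.1 hU) hDU)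
      · rfl
    simp [this]
  · intro T hT
    have hTS := Finset.mem_powerset.1 hT
    rw [abs_mul, abs_div, abs_pow, abs_neg, abs_one, one_pow, abs_of_nonneg (hb0 T),
      abs_of_pos (mul_pos (hνU T hTS) hGpos), div_mul_eq_mul_div, one_mul,
      div_le_one (mul_pos (hνU T hTS) hGpos)]
    -- G ≥ ∏ (1+g)/g * b T
    have key : (∏ p ∈ T, (1 + g p)) * b T ≤ (∏ p ∈ T, g p) * G := by
      have e1 : b T = ∑ V ∈ (S \ T).powerset, a (T ∪ V) := by
        simp only [hb]
        rw [← Finset.sum_filter]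
        refine Finset.sum_bij' (fun U _ => U \ T) (fun V _ => T ∪ V) ?_ ?_ ?_ ?_ ?_
        · intro U hU
          simp only [Finset.mem_filter, Finset.mem_powerset] at hU ⊢
          exact Finset.sdiff_subset_sdiff hU.1 (le_refl _)
        · intro V hV
          simp only [Finset.mem_filter, Finset.mem_powerset] at hV ⊢
          exact ⟨Finset.union_subset hTS (hV.trans Finset.sdiff_subset), Finset.subset_union_left⟩
        · intro U hU
          simp only [Finset.mem_filter, Finset.mem_powerset] at hU
          exact Finset.union_sdiff_of_subset hU.2
        · intro V hV
          simp only [Finset.mem_powerset] at hV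
          have : Disjoint T V := Finset.disjoint_of_subset_right hV Finset.disjoint_sdiff
          rw [Finset.union_sdiff_left, Finset.sdiff_eq_self_of_disjoint this.symm]
        · intro U hU
          simp only [Finset.mem_filter, Finset.mem_powerset] at hU
          rw [Finset.union_sdiff_of_subset hU.2]
      have e2 : G = ∑ V ∈ (S \ T).powerset, ∑ R ∈ T.powerset, a (R ∪ V) := by
        rw [hG, ← Finset.sum_product']
        refine Finset.sum_bij' (fun U _ => (U \ T, U ∩ T)) (fun V _ => V.2 ∪ V.1) ?_ ?_ ?_ ?_ ?_
        · intro U hU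
          simp only [Finset.mem_product, Finset.mem_powerset] at hU ⊢
          exact ⟨Finset.sdiff_subset_sdiff hU (le_refl _), Finset.inter_subset_right⟩
        · intro V hV
          simp only [Finset.mem_product, Finset.mem_powerset] at hV ⊢
          exact Finset.union_subset (hV.2.trans hTS) (hV.1.trans Finset.sdiff_subset)
        · intro U hU
          ext x; simp only [Finset.mem_union, Finset.mem_inter, Finset.mem_sdiff]; tauto
        · rintro ⟨V, R⟩ hV
          simp only [Finset.mem_product, Finset.mem_powerset] at hV
          obtain ⟨hV, hR⟩ := hV
          ext x
          · simp only [Finset.mem_union, Finset.mem_sdiff]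
            have := @hV x; have := @hR x; simp only [Finset.mem_sdiff] at *; tauto
          · simp only [Finset.mem_union, Finset.mem_inter]
            have := @hV x; have := @hR x; simp only [Finset.mem_sdiff] at *; tauto
        · intro U hU
          have : (U ∩ T) ∪ (U \ T) = U := by
            ext x; simp only [Finset.mem_union, Finset.mem_inter, Finset.mem_sdiff]; tauto
          simp only [this, ha]
      rw [e1, e2, Finset.mul_sum, Finset.mul_sum]
      apply Finset.sum_le_sum
      intro V hV
      have hV := Finset.mem_powerset.1 hV
      have hdisj : Disjoint T V := Finset.disjoint_of_subset_right hV Finset.disjoint_sdiff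
      have hTVS : T ∪ V ⊆ S := Finset.union_subset hTS (hV.trans Finset.sdiff_subset)
      by_cases hDTV : D (T ∪ V)
      · have : ∀ R ∈ T.powerset, a (R ∪ V) = (∏ p ∈ R, g p) * ∏ p ∈ V, g p := by
          intro R hR
          have hR := Finset.mem_powerset.1 hR
          have : D (R ∪ V) := hDmono _ _ (Finset.union_subset_union hR (le_refl _)) hTVS hDTV
          simp only [ha]
          rw [if_pos this, Finset.prod_union (Finset.disjoint_of_subset_left hR hdisj)]
        rw [Finset.sum_congr rfl this, ← Finset.sum_mul, ← Finset.prod_one_add]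
        simp only [ha]
        rw [if_pos hDTV, Finset.prod_union hdisj]
        apply le_of_eq; ring
      · have : a (T ∪ V) = 0 := by simp only [ha]; rw [if_neg hDTV]
        rw [this, mul_zero]
        refine mul_nonneg (hgU T hTS).le (Finset.sum_nonneg fun R hR => ha0 _ ?_)
        exact (Finset.union_subset_union (Finset.mem_powerset.1 hR) (le_refl _)).trans hTVS
    have e3 : (∏ p ∈ T, ν p) * ∏ p ∈ T, (1 + g p) = ∏ p ∈ T, g p := by
      rw [← Finset.prod_mul_distrib]
      apply Finset.prod_congr rfl
      intro p hp
      rw [hg p (hTS hp)]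
      have : 1 - ν p ≠ 0 := by linarith [hν1 p (hTS hp)]
      field_simp; ring
    have hpos : 0 < ∏ p ∈ T, (1 + g p) :=
      Finset.prod_pos fun p hp => by linarith [hgpos p (hTS hp)]
    rw [← e3] at key
    have : (∏ p ∈ T, (1 + g p)) * b T ≤ (∏ p ∈ T, (1 + g p)) * ((∏ p ∈ T, ν p) * G) := by
      linarith
    exact le_of_mul_le_mul_left this hpos
  · have hunion : ∀ T ⊆ S, ∀ T' ⊆ S, ∏ p ∈ T ∪ T', ν p
        = (∏ p ∈ T, ν p) * (∏ p ∈ T', ν p) *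
          ∑ R ∈ S.powerset, if R ⊆ T ∧ R ⊆ T' then (∏ p ∈ R, g p)⁻¹ else 0 := by
      intro T hT T' hT'
      have h1 : ∑ R ∈ S.powerset, (if R ⊆ T ∧ R ⊆ T' then (∏ p ∈ R, g p)⁻¹ else 0)
          = ∏ p ∈ T ∩ T', (1 + (g p)⁻¹) := by
        rw [Finset.prod_one_add, ← Finset.sum_filter]
        apply Finset.sum_congr
        · ext R
          simp only [Finset.mem_filter, Finset.mem_powerset, Finset.subset_inter_iff]
          exact ⟨fun h => h.2, fun h => ⟨h.1.trans hT, h⟩⟩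
        · intro R _
          rw [Finset.prod_inv_distrib]
      have h2 : ∏ p ∈ T ∩ T', (1 + (g p)⁻¹) = (∏ p ∈ T ∩ T', ν p)⁻¹ := by
        rw [← Finset.prod_inv_distrib]
        apply Finset.prod_congr rfl
        intro p hp
        have hpS := hT (Finset.mem_inter.1 hp).1
        rw [hg p hpS]
        have := hν1 p hpS
        have := (hν0 p hpS).ne'
        have : 1 - ν p ≠ 0 := by linarith
        field_simp; ring
      rw [h1, h2, ← Finset.prod_union_inter, mul_assoc,
        mul_inv_cancel₀ (hνU _ (Finset.inter_subset_left.trans hT)).ne', mul_one]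
    have hmain : ∀ R ∈ S.powerset,
        ∑ T ∈ S.powerset, (if R ⊆ T then (-1 : ℝ) ^ T.card * b T else 0)
          = (-1) ^ R.card * a R := by
      intro R hR
      calc ∑ T ∈ S.powerset, (if R ⊆ T then (-1 : ℝ) ^ T.card * b T else 0)
          = ∑ T ∈ S.powerset, ∑ U ∈ S.powerset,
              a U * (if R ⊆ T ∧ T ⊆ U then (-1 : ℝ) ^ T.card else 0) := by
            apply Finset.sum_congr rfl
            intro T _
            simp only [hb]
            by_cases h : R ⊆ T
            · rw [if_pos h, Finset.mul_sum]
              apply Finset.sum_congr rfl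
              intro U _
              by_cases h' : T ⊆ U
              · simp [h, h']; ring
              · simp [h']
            · simp [h]
        _ = ∑ U ∈ S.powerset, a U * (if R = U then (-1 : ℝ) ^ R.card else 0) := by
            rw [Finset.sum_comm]
            apply Finset.sum_congr rfl
            intro U hU
            rw [← Finset.mul_sum, alt_sum_between S R U (Finset.mem_powerset.1 hU)
              (Finset.mem_powerset.1 hR)]
        _ = _ := by
            simp only [mul_ite, mul_zero]
            rw [Finset.sum_ite_eq, if_pos hR, mul_comm]
    calc ∑ T ∈ S.powerset, ∑ T' ∈ S.powerset,
          ((-1) ^ T.card / ((∏ p ∈ T, ν p) * G) * b T) *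
          ((-1) ^ T'.card / ((∏ p ∈ T', ν p) * G) * b T') * ∏ p ∈ T ∪ T', ν p
        = ∑ T ∈ S.powerset, ∑ T' ∈ S.powerset, ∑ R ∈ S.powerset,
            (G⁻¹ ^ 2 * (∏ p ∈ R, g p)⁻¹) * ((if R ⊆ T then (-1 : ℝ) ^ T.card * b T else 0) *
              (if R ⊆ T' then (-1 : ℝ) ^ T'.card * b T' else 0)) := by
          apply Finset.sum_congr rfl
          intro T hT
          apply Finset.sum_congr rfl
          intro T' hT'
          have hT := Finset.mem_powerset.1 hT
          have hT' := Finset.mem_powerset.1 hT'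
          rw [hunion T hT T' hT', ← mul_assoc, Finset.mul_sum]
          apply Finset.sum_congr rfl
          intro R _
          have h1 := (hνU T hT).ne'
          have h2 := (hνU T' hT').ne'
          by_cases hR : R ⊆ T <;> by_cases hR' : R ⊆ T' <;> simp [hR, hR']
          field_simp
      _ = ∑ R ∈ S.powerset, (G⁻¹ ^ 2 * (∏ p ∈ R, g p)⁻¹) *
            ((∑ T ∈ S.powerset, (if R ⊆ T then (-1 : ℝ) ^ T.card * b T else 0)) *
             (∑ T ∈ S.powerset, (if R ⊆ T then (-1 : ℝ) ^ T.card * b T else 0))) := by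
          have : ∀ T ∈ S.powerset, (∑ T' ∈ S.powerset, ∑ R ∈ S.powerset,
            (G⁻¹ ^ 2 * (∏ p ∈ R, g p)⁻¹) * ((if R ⊆ T then (-1 : ℝ) ^ T.card * b T else 0) *
              (if R ⊆ T' then (-1 : ℝ) ^ T'.card * b T' else 0))) = ∑ R ∈ S.powerset, 
              ∑ T' ∈ S.powerset, (G⁻¹ ^ 2 * (∏ p ∈ R, g p)⁻¹) * ((if R ⊆ T then (-1 : ℝ) ^ T.card * b T else 0) *
              (if R ⊆ T' then (-1 : ℝ) ^ T'.card * b T' else 0)) := fun T _ => Finset.sum_comm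
          rw [Finset.sum_congr rfl this, Finset.sum_comm]
          apply Finset.sum_congr rfl
          intro R _
          rw [Finset.sum_mul_sum, Finset.mul_sum]
          apply Finset.sum_congr rfl
          intro T _
          exact (Finset.mul_sum _ _ _).symm
      _ = ∑ R ∈ S.powerset, G⁻¹ ^ 2 * a R := by
          apply Finset.sum_congr rfl
          intro R hR
          rw [hmain R hR]
          have h1 := (hgU R (Finset.mem_powerset.1 hR)).ne'
          have h2 : ((-1 : ℝ) ^ R.card) * (-1) ^ R.card = 1 := by
            rw [← mul_pow]; simp
          have h3 : (∏ p ∈ R, g p)⁻¹ * (a R * a R) = a R := by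
            simp only [ha]
            split_ifs
            · field_simp
            · simp
          calc _ = G⁻¹ ^ 2 * (((-1 : ℝ) ^ R.card) * (-1) ^ R.card) *
                ((∏ p ∈ R, g p)⁻¹ * (a R * a R)) := by ring
            _ = _ := by rw [h2, h3, mul_one]
      _ = 1 / G := by
          rw [← Finset.mul_sum, ← hG]
          field_simp

end SelbergAbstract

section SelbergCount

/-- number of roots mod `p` of `n (m n + 1)` -/
def omg (m p : ℕ) : ℕ := if p ∣ m then 1 else 2

/-- truncated sum over squarefree products of elements of `S` -/
noncomputable def Asum (g : ℕ → ℝ) (S : Finset ℕ) (z : ℝ) : ℝ :=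
  ∑ U ∈ S.powerset, if ((∏ p ∈ U, p : ℕ) : ℝ) ≤ z then ∏ p ∈ U, g p else 0

lemma card_crt (u v : ℕ) (hu : 0 < u) (hv : 0 < v) (h : Nat.Coprime u v) (A B : ℕ → Prop) [DecidablePred A]
    [DecidablePred B]
    (hA : ∀ a, A a ↔ A (a % u)) (hB : ∀ a, B a ↔ B (a % v)) :
    ((range (u * v)).filter (fun a => A a ∧ B a)).card
      = ((range u).filter A).card * ((range v).filter B).card := by
  rw [← Finset.card_product]
  refine Finset.card_nbij' (fun a => (a % u, a % v))
    (fun ab => (Nat.chineseRemainder h ab.1 ab.2 : ℕ)) ?_ ?_ ?_ ?_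
  · intro a ha
    simp only [Finset.coe_filter, Finset.coe_product, Set.mem_prod, Set.mem_ofPred_eq,
      Finset.mem_range] at ha ⊢
    exact ⟨⟨Nat.mod_lt _ hu, (hA a).1 ha.2.1⟩, ⟨Nat.mod_lt _ hv, (hB a).1 ha.2.2⟩⟩
  · rintro ⟨a, b⟩ hab
    simp only [Finset.coe_filter, Finset.coe_product, Set.mem_prod, Set.mem_ofPred_eq,
      Finset.mem_range] at hab ⊢
    obtain ⟨⟨h1, h2⟩, h3, h4⟩ := hab
    have hc := (Nat.chineseRemainder h a b).2
    refine ⟨Nat.chineseRemainder_lt_mul h a b hu.ne' hv.ne', ?_, ?_⟩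
    · rw [hA]; have := hc.1; unfold Nat.ModEq at this; rw [this, ← hA]; exact h2
    · rw [hB]; have := hc.2; unfold Nat.ModEq at this; rw [this, ← hB]; exact h4
  · intro a ha
    simp only [Finset.coe_filter, Set.mem_ofPred_eq, Finset.mem_range] at ha
    have hc := (Nat.chineseRemainder h (a % u) (a % v)).2
    have h1 : (Nat.chineseRemainder h (a % u) (a % v) : ℕ) ≡ a [MOD u * v] := by
      rw [← Nat.modEq_and_modEq_iff_modEq_mul h]
      exact ⟨hc.1.trans (Nat.mod_modEq _ _), hc.2.trans (Nat.mod_modEq _ _)⟩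
    exact Nat.ModEq.eq_of_lt_of_lt h1 (Nat.chineseRemainder_lt_mul h _ _ hu.ne' hv.ne') ha.1
  · rintro ⟨a, b⟩ hab
    simp only [Finset.coe_filter, Finset.coe_product, Set.mem_prod, Set.mem_ofPred_eq,
      Finset.mem_range] at hab
    obtain ⟨⟨h1, h2⟩, h3, h4⟩ := hab
    have hc := (Nat.chineseRemainder h a b).2
    ext
    · have := hc.1; unfold Nat.ModEq at this; simp only; rw [this, Nat.mod_eq_of_lt h1]
    · have := hc.2; unfold Nat.ModEq at this; simp only; rw [this, Nat.mod_eq_of_lt h3]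

lemma dvd_period (m p a : ℕ) : p ∣ a * (m * a + 1) ↔ p ∣ (a % p) * (m * (a % p) + 1) := by
  have h : a * (m * a + 1) ≡ (a % p) * (m * (a % p) + 1) [MOD p] := by
    have h1 : a ≡ a % p [MOD p] := (Nat.mod_modEq a p).symm
    exact h1.mul ((h1.mul_left m).add_right 1)
  exact h.dvd_iff (dvd_refl p)

lemma card_root (m p : ℕ) (hp : p.Prime) :
    ((range p).filter (fun a => p ∣ a * (m * a + 1))).card = omg m p := by
  unfold omg
  split_ifs with h
  · rw [Finset.card_eq_one]
    refine ⟨0, ?_⟩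
    ext a
    simp only [Finset.mem_filter, Finset.mem_range, Finset.mem_singleton]
    constructor
    · rintro ⟨h1, h2⟩
      rcases (Nat.Prime.dvd_mul hp).1 h2 with h3 | h3
      · exact Nat.eq_zero_of_dvd_of_lt h3 h1
      · exfalso
        have : p ∣ 1 := (Nat.dvd_add_right (h.mul_right a)).1 h3
        exact hp.one_lt.ne' (Nat.dvd_one.1 this)
    · rintro rfl; simp [hp.pos]
  · have : Fact p.Prime := ⟨hp⟩
    have hm0 : (m : ZMod p) ≠ 0 := by
      rwa [Ne, ZMod.natCast_eq_zero_iff]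
    set r : ℕ := (-(m : ZMod p)⁻¹).val with hr
    have hrlt : r < p := ZMod.val_lt _
    have hrr : ((r : ℕ) : ZMod p) = -(m : ZMod p)⁻¹ := by rw [hr]; exact ZMod.natCast_zmod_val _
    have hr0 : r ≠ 0 := by
      intro h0
      rw [h0] at hrr
      simp only [Nat.cast_zero, zero_eq_neg, inv_eq_zero] at hrr
      exact hm0 hrr
    rw [Finset.card_eq_two]
    refine ⟨0, r, hr0.symm, ?_⟩
    ext a
    simp only [Finset.mem_filter, Finset.mem_range, Finset.mem_singleton, Finset.mem_insert]
    constructor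
    · rintro ⟨h1, h2⟩
      rcases (Nat.Prime.dvd_mul hp).1 h2 with h3 | h3
      · left; exact Nat.eq_zero_of_dvd_of_lt h3 h1
      · right
        rw [← ZMod.natCast_eq_zero_iff] at h3
        push_cast at h3
        have h4 : (a : ZMod p) = r := by
          rw [hrr]
          have : (m : ZMod p) * a = -1 := by linear_combination h3
          field_simp
          linear_combination this
        rw [ZMod.natCast_eq_natCast_iff] at h4
        exact Nat.ModEq.eq_of_lt_of_lt h4 h1 hrlt
    · rintro (rfl | rfl)
      · simp [hp.pos]
      · refine ⟨hrlt, Dvd.dvd.mul_left ?_ _⟩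
        rw [← ZMod.natCast_eq_zero_iff]
        push_cast
        rw [hrr]
        field_simp
        ring

lemma card_root_prod (m : ℕ) (U : Finset ℕ) (hU : ∀ p ∈ U, p.Prime) :
    ((range (∏ p ∈ U, p)).filter (fun a => ∀ p ∈ U, p ∣ a * (m * a + 1))).card
      = ∏ p ∈ U, omg m p := by
  induction U using Finset.induction_on with
  | empty => simp
  | insert q U hq ih =>
    have hU' : ∀ p ∈ U, p.Prime := fun p hp => hU p (Finset.mem_insert_of_mem hp)
    have hqp : q.Prime := hU q (Finset.mem_insert_self _ _)
    rw [Finset.prod_insert hq, Finset.prod_insert hq, ← ih hU', ← card_root m q hqp]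
    rw [← card_crt q (∏ p ∈ U, p) hqp.pos (Finset.prod_pos fun p hp => (hU' p hp).pos) ?_
      (fun a => q ∣ a * (m * a + 1)) (fun a => ∀ p ∈ U, p ∣ a * (m * a + 1))
      (dvd_period m q) ?_]
    · congr 1
      ext a
      simp
    · apply Nat.Coprime.prod_right
      intro p hp
      exact (Nat.coprime_primes hqp (hU' p hp)).2 (by rintro rfl; exact hq hp)
    · intro a
      apply forall₂_congr
      intro p hp
      rw [dvd_period m p a, dvd_period m p (a % ∏ p ∈ U, p), Nat.mod_mod_of_dvd _ (Finset.dvd_prod_of_mem _ hp)]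

lemma count_class (N d a : ℕ) (hd : 0 < d) :
    |(((Finset.Ioc 0 N).filter (fun n => n ≡ a [MOD d])).card : ℝ) - N / d| ≤ 1 := by
  have h := Nat.Ioc_filter_modEq_card 0 N hd a
  have hq : (0 : ℚ) < d := by exact_mod_cast hd
  set X : ℤ := ⌊((N : ℚ) - a) / d⌋ with hX
  set Y : ℤ := ⌊(((0 : ℕ) : ℚ) - a) / d⌋ with hY
  have hXY : Y ≤ X := by
    apply Int.floor_le_floor
    push_cast
    apply div_le_div_of_nonneg_right _ hq.le
    have : (0 : ℚ) ≤ N := by positivity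
    linarith
  rw [max_eq_left (by linarith)] at h
  have h1 := Int.floor_le (((N : ℚ) - a) / d)
  have h2 := Int.lt_floor_add_one (((N : ℚ) - a) / d)
  have h3 := Int.floor_le ((((0 : ℕ) : ℚ) - a) / d)
  have h4 := Int.lt_floor_add_one ((((0 : ℕ) : ℚ) - a) / d)
  rw [← hX] at h1 h2
  rw [← hY] at h3 h4
  have e : ((N : ℚ) - a) / d = N / d + (((0 : ℕ) : ℚ) - a) / d := by push_cast; ring
  rw [e] at h1 h2
  have hq' : |(((Finset.Ioc 0 N).filter (fun n => n ≡ a [MOD d])).card : ℚ) - N / d| ≤ 1 := by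
    have h' : (((Finset.Ioc 0 N).filter (fun n => n ≡ a [MOD d])).card : ℚ) = (X : ℚ) - Y := by
      exact_mod_cast h
    rw [h', abs_le]
    constructor <;> linarith
  have h5 := (Rat.cast_le (K := ℝ)).2 hq'
  push_cast at h5
  exact h5

lemma count_roots (m N : ℕ) (U : Finset ℕ) (hU : ∀ p ∈ U, p.Prime) :
    |(((Finset.Ioc 0 N).filter (fun n => ∀ p ∈ U, p ∣ n * (m * n + 1))).card : ℝ)
      - N * ∏ p ∈ U, ((omg m p : ℝ) / p)| ≤ ∏ p ∈ U, (omg m p : ℝ) := by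
  set d := ∏ p ∈ U, p with hd
  have hdpos : 0 < d := Finset.prod_pos fun p hp => (hU p hp).pos
  set R := (range d).filter (fun a => ∀ p ∈ U, p ∣ a * (m * a + 1)) with hR
  have hRc : (R.card : ℝ) = ∏ p ∈ U, (omg m p : ℝ) := by
    rw [hR, card_root_prod m U hU]; push_cast; rfl
  have h1 : ((Finset.Ioc 0 N).filter (fun n => ∀ p ∈ U, p ∣ n * (m * n + 1))).card
      = ∑ a ∈ R, ((Finset.Ioc 0 N).filter (fun n => n ≡ a [MOD d])).card := by
    rw [Finset.card_eq_sum_card_fiberwise (f := fun n => n % d) (t := R)]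
    · apply Finset.sum_congr rfl
      intro a ha
      congr 1
      ext n
      simp only [hR, Finset.mem_filter, Finset.mem_range] at ha
      simp only [Finset.mem_filter, Finset.mem_Ioc]
      constructor
      · rintro ⟨⟨h1, h2⟩, h3⟩
        refine ⟨h1, ?_⟩
        unfold Nat.ModEq
        rw [h3, Nat.mod_eq_of_lt ha.1]
      · rintro ⟨h1, h3⟩
        unfold Nat.ModEq at h3
        rw [Nat.mod_eq_of_lt ha.1] at h3
        refine ⟨⟨h1, ?_⟩, h3⟩
        intro p hp
        have := ha.2 p hp
        rw [← h3, dvd_period, Nat.mod_mod_of_dvd _ (Finset.dvd_prod_of_mem _ hp), ← dvd_period] at this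
        exact this
    · intro n hn
      simp only [Finset.coe_filter, Set.mem_ofPred_eq, hR, Finset.mem_range] at hn ⊢
      refine ⟨Nat.mod_lt _ hdpos, fun p hp => ?_⟩
      rw [dvd_period, Nat.mod_mod_of_dvd _ (Finset.dvd_prod_of_mem _ hp), ← dvd_period]
      exact hn.2 p hp
  have h2 : (N : ℝ) * ∏ p ∈ U, ((omg m p : ℝ) / p) = ∑ a ∈ R, (N : ℝ) / d := by
    rw [Finset.sum_const, nsmul_eq_mul, hRc, Finset.prod_div_distrib, hd]
    push_cast
    ring
  rw [h1, h2, ← hRc]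
  push_cast
  rw [← Finset.sum_sub_distrib]
  refine (Finset.abs_sum_le_sum_abs _ _).trans ?_
  refine (Finset.sum_le_sum fun a _ => count_class N d a hdpos).trans ?_
  simp

lemma omg_pos (m p : ℕ) : 0 < omg m p := by unfold omg; split_ifs <;> norm_num
lemma omg_le (m p : ℕ) : omg m p ≤ 2 := by unfold omg; split_ifs <;> norm_num
lemma omg_lt (m p : ℕ) (hm : 2 ∣ m) (hp : p.Prime) : omg m p < p := by
  unfold omg; split_ifs with h
  · exact hp.one_lt
  · have := hp.two_le
    have : p ≠ 2 := by rintro rfl; exact h hm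
    omega

lemma prod_le_prod_nat (U V : Finset ℕ) (h : U ⊆ V) (hV : ∀ p ∈ V, p.Prime) :
    ∏ p ∈ U, p ≤ ∏ p ∈ V, p :=
  Finset.prod_le_prod_of_subset_of_one_le' h fun p hp _ => (hV p hp).pos

lemma selberg_sieve (m N : ℕ) (hm : 2 ∣ m) (S : Finset ℕ) (hS : ∀ p ∈ S, p.Prime) (y : ℝ)
    (hy : 1 ≤ y) :
    (((Finset.Ioc 0 N).filter (fun n => ∀ p ∈ S, ¬ p ∣ n * (m * n + 1))).card : ℝ)
      ≤ N / Asum (fun p => (omg m p : ℝ) / (p - omg m p)) S y + (Asum (fun _ => 2) S y) ^ 2 := by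
  obtain ⟨l, hl0, hlD, hl1, hlG⟩ := selberg_weights S (fun p => (omg m p : ℝ) / p)
    (fun p => (omg m p : ℝ) / (p - omg m p))
    (fun p hp => div_pos (by exact_mod_cast omg_pos m p) (by exact_mod_cast (hS p hp).pos))
    (fun p hp => by
      rw [div_lt_one (by exact_mod_cast (hS p hp).pos)]
      exact_mod_cast omg_lt m p hm (hS p hp))
    (fun p hp => by
      have h1 : (0 : ℝ) < p := by exact_mod_cast (hS p hp).pos
      have h2 : (omg m p : ℝ) < p := by exact_mod_cast omg_lt m p hm (hS p hp)
      have h3 : (p : ℝ) - omg m p ≠ 0 := by linarith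
      have h4 : 1 - (omg m p : ℝ) / p ≠ 0 := by
        rw [one_sub_div h1.ne']; exact div_ne_zero h3 h1.ne'
      field_simp)
    (fun U => ((∏ p ∈ U, p : ℕ) : ℝ) ≤ y) (by simpa using hy)
    (fun U V hUV hVS hV => le_trans (Nat.cast_le.2 (prod_le_prod_nat U V hUV
      (fun p hp => hS p (hVS hp)))) hV) _ rfl
  have hlG' : ∑ T ∈ S.powerset, ∑ T' ∈ S.powerset, l T * l T' * ∏ p ∈ T ∪ T', ((omg m p : ℝ) / p)
      = 1 / Asum (fun p => (omg m p : ℝ) / (p - omg m p)) S y := hlG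
  set G := Asum (fun p => (omg m p : ℝ) / (p - omg m p)) S y with hGdef
  set E : Finset ℕ → ℕ → ℝ := fun T n => if ∀ p ∈ T, p ∣ n * (m * n + 1) then 1 else 0 with hE
  have step1 : (((Finset.Ioc 0 N).filter (fun n => ∀ p ∈ S, ¬ p ∣ n * (m * n + 1))).card : ℝ)
      ≤ ∑ n ∈ Finset.Ioc 0 N, (∑ T ∈ S.powerset, l T * E T n) ^ 2 := by
    rw [Finset.card_filter]
    push_cast
    apply Finset.sum_le_sum
    intro n _
    split_ifs with h
    · have : ∑ T ∈ S.powerset, l T * E T n = 1 := by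
        rw [Finset.sum_eq_single ∅]
        · simp [hl0, hE]
        · intro T hT hne
          obtain ⟨p, hp⟩ := Finset.nonempty_iff_ne_empty.2 hne
          have : ¬ ∀ p ∈ T, p ∣ n * (m * n + 1) := fun h' =>
            h p (Finset.mem_powerset.1 hT hp) (h' p hp)
          simp only [hE]
          rw [if_neg this, mul_zero]
        · simp
      rw [this]; norm_num
    · positivity
  have step2 : ∑ n ∈ Finset.Ioc 0 N, (∑ T ∈ S.powerset, l T * E T n) ^ 2
      = ∑ T ∈ S.powerset, ∑ T' ∈ S.powerset, l T * l T' *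
        (((Finset.Ioc 0 N).filter (fun n => ∀ p ∈ T ∪ T', p ∣ n * (m * n + 1))).card : ℝ) := by
    have : ∀ n ∈ Finset.Ioc 0 N, (∑ T ∈ S.powerset, l T * E T n) ^ 2
        = ∑ T ∈ S.powerset, ∑ T' ∈ S.powerset, l T * l T' * E (T ∪ T') n := by
      intro n _
      rw [sq, Finset.sum_mul_sum]
      apply Finset.sum_congr rfl
      intro T _
      apply Finset.sum_congr rfl
      intro T' _
      have : E (T ∪ T') n = E T n * E T' n := by
        simp only [hE, Finset.mem_union]
        by_cases h1 : ∀ p ∈ T, p ∣ n * (m * n + 1) <;>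
        by_cases h2 : ∀ p ∈ T', p ∣ n * (m * n + 1)
        · rw [if_pos h1, if_pos h2, if_pos, mul_one]
          rintro p (hp | hp); exacts [h1 p hp, h2 p hp]
        · rw [if_neg h2, if_neg, mul_zero]
          exact fun h => h2 fun p hp => h p (Or.inr hp)
        · rw [if_neg h1, if_neg, zero_mul]
          exact fun h => h1 fun p hp => h p (Or.inl hp)
        · rw [if_neg h1, if_neg, zero_mul]
          exact fun h => h1 fun p hp => h p (Or.inl hp)
      rw [this]; ring
    rw [Finset.sum_congr rfl this, Finset.sum_comm]
    apply Finset.sum_congr rfl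
    intro T _
    rw [Finset.sum_comm]
    apply Finset.sum_congr rfl
    intro T' _
    rw [← Finset.mul_sum, Finset.card_filter]
    push_cast
    congr 1
    apply Finset.sum_congr rfl
    intro n _
    simp only [hE]
    by_cases h : ∀ p ∈ T ∪ T', p ∣ n * (m * n + 1)
    · rw [if_pos h, if_pos h]
    · rw [if_neg h, if_neg h]
  have step3 : ∀ T ∈ S.powerset, ∀ T' ∈ S.powerset, l T * l T' *
        (((Finset.Ioc 0 N).filter (fun n => ∀ p ∈ T ∪ T', p ∣ n * (m * n + 1))).card : ℝ)
      ≤ N * (l T * l T' * ∏ p ∈ T ∪ T', ((omg m p : ℝ) / p)) +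
        (if ((∏ p ∈ T, p : ℕ) : ℝ) ≤ y then ∏ p ∈ T, (2 : ℝ) else 0) *
        (if ((∏ p ∈ T', p : ℕ) : ℝ) ≤ y then ∏ p ∈ T', (2 : ℝ) else 0) := by
    intro T hT T' hT'
    by_cases h1 : ((∏ p ∈ T, p : ℕ) : ℝ) ≤ y
    swap
    · rw [hlD T hT h1, if_neg h1]; simp
    by_cases h2 : ((∏ p ∈ T', p : ℕ) : ℝ) ≤ y
    swap
    · rw [hlD T' hT' h2, if_neg h2]; simp
    rw [if_pos h1, if_pos h2]
    have hUp : ∀ p ∈ T ∪ T', p.Prime := fun p hp => hS p (by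
      rcases Finset.mem_union.1 hp with h | h
      exacts [Finset.mem_powerset.1 hT h, Finset.mem_powerset.1 hT' h])
    have hc := count_roots m N (T ∪ T') hUp
    set c := (((Finset.Ioc 0 N).filter (fun n => ∀ p ∈ T ∪ T', p ∣ n * (m * n + 1))).card : ℝ)
    set P := ∏ p ∈ T ∪ T', ((omg m p : ℝ) / p)
    have hk : ∏ p ∈ T ∪ T', (omg m p : ℝ) ≤ (∏ p ∈ T, (2 : ℝ)) * ∏ p ∈ T', (2 : ℝ) := by
      calc ∏ p ∈ T ∪ T', (omg m p : ℝ) ≤ ∏ p ∈ T ∪ T', (2 : ℝ) :=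
            Finset.prod_le_prod (fun p _ => by positivity) (fun p _ => by exact_mod_cast omg_le m p)
        _ ≤ _ := by
            simp only [Finset.prod_const, ← pow_add]
            exact pow_le_pow_right₀ (by norm_num) (Finset.card_union_le _ _)
    have hll : |l T * l T'| ≤ 1 := by
      rw [abs_mul]; exact mul_le_one₀ (hl1 T hT) (abs_nonneg _) (hl1 T' hT')
    have : l T * l T' * (c - N * P) ≤ ∏ p ∈ T ∪ T', (omg m p : ℝ) := by
      calc l T * l T' * (c - N * P) ≤ |l T * l T' * (c - N * P)| := le_abs_self _
        _ = |l T * l T'| * |c - N * P| := abs_mul _ _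
        _ ≤ 1 * |c - N * P| := by gcongr
        _ ≤ _ := by rw [one_mul]; exact hc
    linarith
  calc _ ≤ _ := step1
    _ = _ := step2
    _ ≤ _ := Finset.sum_le_sum fun T hT => Finset.sum_le_sum fun T' hT' => step3 T hT T' hT'
    _ = N * (∑ T ∈ S.powerset, ∑ T' ∈ S.powerset, l T * l T' * ∏ p ∈ T ∪ T', ((omg m p : ℝ) / p))
        + (Asum (fun _ => 2) S y) ^ 2 := by
        simp only [Finset.sum_add_distrib]
        congr 1
        · simp only [Finset.mul_sum]
        · unfold Asum
          rw [sq, Finset.sum_mul_sum]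
    _ = _ := by rw [hlG', mul_one_div]

end SelbergCount

section AsumIneq

theorem Asum_nonneg (g : ℕ → ℝ) (S : Finset ℕ) (z : ℝ) (hg : ∀ p ∈ S, 0 ≤ g p) : 0 ≤ Asum g S z := by
  unfold Asum
  apply Finset.sum_nonneg
  intro U hU
  split_ifs
  · exact Finset.prod_nonneg fun p hp => hg p (Finset.mem_powerset.1 hU hp)
  · exact le_rfl

theorem Asum_mono (g : ℕ → ℝ) (S : Finset ℕ) (z z' : ℝ) (hg : ∀ p ∈ S, 0 ≤ g p) (h : z ≤ z') :
    Asum g S z ≤ Asum g S z' := by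
  unfold Asum
  apply Finset.sum_le_sum
  intro U hU
  have h0 : 0 ≤ ∏ p ∈ U, g p := Finset.prod_nonneg fun p hp => hg p (Finset.mem_powerset.1 hU hp)
  split_ifs with h1 h2
  · exact le_rfl
  · exact absurd (h1.trans h) h2
  · exact h0
  · exact le_rfl

theorem Asum_insert (g : ℕ → ℝ) (S : Finset ℕ) (q : ℕ) (hq : q ∉ S) (hq0 : 0 < q) (z : ℝ) :
    Asum g (insert q S) z = Asum g S z + g q * Asum g S (z / q) := by
  unfold Asum
  rw [Finset.sum_powerset_insert hq, Finset.mul_sum]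
  congr 1
  apply Finset.sum_congr rfl
  intro U hU
  have hqU : q ∉ U := fun h => hq (Finset.mem_powerset.1 hU h)
  rw [Finset.prod_insert hqU, Finset.prod_insert hqU]
  have hq' : (0 : ℝ) < q := by exact_mod_cast hq0
  have : (((q * ∏ p ∈ U, p : ℕ) : ℝ) ≤ z) ↔ (((∏ p ∈ U, p : ℕ) : ℝ) ≤ z / q) := by
    rw [le_div_iff₀ hq']; push_cast; rw [mul_comm]
  by_cases h : ((∏ p ∈ U, p : ℕ) : ℝ) ≤ z / q
  · rw [if_pos (this.2 h), if_pos h]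
  · rw [if_neg (fun h' => h (this.1 h')), if_neg h, mul_zero]

theorem Asum_empty (g : ℕ → ℝ) (z : ℝ) : Asum g ∅ z = if (1 : ℝ) ≤ z then 1 else 0 := by
  by_cases h : (1 : ℝ) ≤ z
  · rw [if_pos h]; simp [Asum, h]
  · rw [if_neg h]; simp [Asum, h]

theorem Asum_compare (β g ρ : ℕ → ℝ) (ℓ : ℕ → ℕ) (S : Finset ℕ) :
    (∀ p ∈ S, 1 ≤ p) → (∀ p ∈ S, 0 ≤ β p) → (∀ p ∈ S, 0 ≤ g p) → (∀ p ∈ S, 0 ≤ ρ p) →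
    (∀ p ∈ S, 1 + β p ≤ ρ p * (1 + g p)) →
    (∀ p ∈ S, (1 ≤ ρ p ∧ ℓ p = 1) ∨ ℓ p = p) → ∀ z : ℝ, 0 ≤ z →
    Asum β S z ≤ (∏ p ∈ S, ρ p) * Asum g S (z * ∏ p ∈ S, (ℓ p : ℝ)) := by
  induction S using Finset.induction_on with
  | empty =>
    intro _ _ _ _ _ _ z hz
    simp [Asum_empty]
  | insert q S hq ih =>
    intro h1 hβ hg hρ hle hℓ z hz
    have ih' := ih (fun p hp => h1 p (Finset.mem_insert_of_mem hp))
      (fun p hp => hβ p (Finset.mem_insert_of_mem hp))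
      (fun p hp => hg p (Finset.mem_insert_of_mem hp))
      (fun p hp => hρ p (Finset.mem_insert_of_mem hp))
      (fun p hp => hle p (Finset.mem_insert_of_mem hp))
      (fun p hp => hℓ p (Finset.mem_insert_of_mem hp))
    have hgS : ∀ p ∈ S, 0 ≤ g p := fun p hp => hg p (Finset.mem_insert_of_mem hp)
    have hqm := Finset.mem_insert_self q S
    have hq1 : (1 : ℝ) ≤ q := by exact_mod_cast h1 q hqm
    have hq0 : (0 : ℝ) < q := by linarith
    rw [Asum_insert β S q hq (h1 q hqm), Asum_insert g S q hq (h1 q hqm), Finset.prod_insert hq,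
      Finset.prod_insert hq]
    have hP : 0 ≤ ∏ p ∈ S, ρ p :=
      Finset.prod_nonneg fun p hp => hρ p (Finset.mem_insert_of_mem hp)
    have hL : 0 ≤ ∏ p ∈ S, (ℓ p : ℝ) := Finset.prod_nonneg fun p hp => by positivity
    have i1 := ih' z hz
    have i2 := ih' (z / q) (by positivity)
    set P := ∏ p ∈ S, ρ p
    set L := ∏ p ∈ S, (ℓ p : ℝ)
    have e2 : z / q * L = (z * L) / q := by ring
    rw [e2] at i2
    set a := z * L with ha
    have ha0 : 0 ≤ a := by positivity
    have hβq := hβ q hqm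
    have hgq := hg q hqm
    have hρq := hρ q hqm
    have hleq := hle q hqm
    have key : Asum g S a + β q * Asum g S (a / q) ≤
        ρ q * (Asum g S (z * (ℓ q * L)) + g q * Asum g S (z * (ℓ q * L) / q)) := by
      have hA0 := Asum_nonneg g S (a / q) hgS
      have hA1 : Asum g S (a / q) ≤ Asum g S a := Asum_mono g S _ _ hgS (div_le_self ha0 hq1)
      rcases hℓ q hqm with ⟨hr, hl⟩ | hl
      · rw [hl, Nat.cast_one, one_mul, ← ha]
        nlinarith [mul_nonneg (sub_nonneg.2 hr) (sub_nonneg.2 hA1), mul_nonneg (sub_nonneg.2 hleq) hA0]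
      · rw [hl]
        have e3 : z * (q * L) / q = a := by rw [ha]; field_simp
        rw [e3]
        have hA2 : Asum g S a ≤ Asum g S (z * (q * L)) := by
          apply Asum_mono g S _ _ hgS
          rw [show z * (q * L) = q * a by rw [ha]; ring]
          nlinarith
        have hA00 := Asum_nonneg g S a hgS
        nlinarith [mul_nonneg hβq (sub_nonneg.2 hA1), mul_nonneg hρq (sub_nonneg.2 hA2),
          mul_nonneg (sub_nonneg.2 hleq) hA00]
    calc _ ≤ P * Asum g S a + β q * (P * Asum g S (a / q)) := by gcongr
      _ = P * (Asum g S a + β q * Asum g S (a / q)) := by ring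
      _ ≤ P * _ := mul_le_mul_of_nonneg_left key hP
      _ = _ := by ring

noncomputable def Cconv (α β : ℕ → ℝ) (S : Finset ℕ) (z : ℝ) : ℝ :=
  ∑ U ∈ S.powerset, (∏ p ∈ U, α p) * Asum β S (z / ((∏ p ∈ U, p : ℕ) : ℝ))

theorem Cconv_nonneg (α β : ℕ → ℝ) (S : Finset ℕ) (z : ℝ) (hα : ∀ p ∈ S, 0 ≤ α p)
    (hβ : ∀ p ∈ S, 0 ≤ β p) : 0 ≤ Cconv α β S z := by
  apply Finset.sum_nonneg
  intro U hU
  exact mul_nonneg (Finset.prod_nonneg fun p hp => hα p (Finset.mem_powerset.1 hU hp))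
    (Asum_nonneg _ _ _ hβ)

theorem Cconv_empty (α β : ℕ → ℝ) (z : ℝ) : Cconv α β ∅ z = Asum β ∅ z := by
  unfold Cconv
  rw [Finset.powerset_empty, Finset.sum_singleton]
  simp

theorem Cconv_insert (α β : ℕ → ℝ) (S : Finset ℕ) (q : ℕ) (hq : q ∉ S) (hq0 : 0 < q) (z : ℝ) :
    Cconv α β (insert q S) z = Cconv α β S z + (α q + β q) * Cconv α β S (z / q)
      + α q * β q * Cconv α β S (z / q / q) := by
  unfold Cconv
  rw [Finset.sum_powerset_insert hq]
  simp only [Asum_insert β S q hq hq0, Finset.mul_sum]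
  rw [← Finset.sum_add_distrib, ← Finset.sum_add_distrib, ← Finset.sum_add_distrib]
  apply Finset.sum_congr rfl
  intro U hU
  have hqU : q ∉ U := fun h => hq (Finset.mem_powerset.1 hU h)
  rw [Finset.prod_insert hqU, Finset.prod_insert hqU]
  push_cast
  have e1 : z / (q * ∏ p ∈ U, (p : ℝ)) = z / q / ∏ p ∈ U, (p : ℝ) := by rw [div_div]
  have e2 : (z / ∏ p ∈ U, (p : ℝ)) / q = z / q / ∏ p ∈ U, (p : ℝ) := by rw [div_div, div_div, mul_comm]
  have e3 : (z / q / ∏ p ∈ U, (p : ℝ)) / q = z / q / q / ∏ p ∈ U, (p : ℝ) := by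
    simp only [div_div]; congr 1; ring
  rw [e1, e2, e3]
  ring

theorem Cconv_le (α β γ : ℕ → ℝ) (S : Finset ℕ) :
    (∀ p ∈ S, 1 ≤ p) → (∀ p ∈ S, 0 ≤ α p) → (∀ p ∈ S, 0 ≤ β p) →
    (∀ p ∈ S, 1 + γ p = (1 + α p) * (1 + β p)) → ∀ z : ℝ, 0 ≤ z →
    Cconv α β S z ≤ Asum γ S z := by
  induction S using Finset.induction_on with
  | empty =>
    intro _ _ _ _ z hz
    rw [Cconv_empty, Asum_empty, Asum_empty]
  | insert q S hq ih =>
    intro h1 hα hβ hγ z hz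
    have ih' := ih (fun p hp => h1 p (Finset.mem_insert_of_mem hp))
      (fun p hp => hα p (Finset.mem_insert_of_mem hp))
      (fun p hp => hβ p (Finset.mem_insert_of_mem hp))
      (fun p hp => hγ p (Finset.mem_insert_of_mem hp))
    have hγS : ∀ p ∈ S, 0 ≤ γ p := by
      intro p hp
      have a := hα p (Finset.mem_insert_of_mem hp)
      have b := hβ p (Finset.mem_insert_of_mem hp)
      have c := hγ p (Finset.mem_insert_of_mem hp)
      nlinarith
    have hqm := Finset.mem_insert_self q S
    have hq1 : (1 : ℝ) ≤ q := by exact_mod_cast h1 q hqm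
    rw [Cconv_insert α β S q hq (h1 q hqm), Asum_insert γ S q hq (h1 q hqm)]
    have hαq := hα q hqm
    have hβq := hβ q hqm
    have hγq := hγ q hqm
    have hz1 : 0 ≤ z / q := by positivity
    have i1 := ih' z hz
    have i2 := ih' (z / q) hz1
    have i3 := ih' (z / q / q) (by positivity)
    have hm : Asum γ S (z / q / q) ≤ Asum γ S (z / q) :=
      Asum_mono γ S _ _ hγS (div_le_self hz1 hq1)
    have hab : 0 ≤ α q * β q := mul_nonneg hαq hβq
    have i3' := mul_le_mul_of_nonneg_left (i3.trans hm) hab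
    have i2' := mul_le_mul_of_nonneg_left i2 (add_nonneg hαq hβq)
    have : γ q = α q + β q + α q * β q := by linarith
    rw [this]; linarith

theorem Asum_two_le (S : Finset ℕ) : (∀ p ∈ S, 1 ≤ p) → ∀ z : ℝ, 0 ≤ z →
    Asum (fun _ => 2) S z ≤ Cconv (fun _ => 1) (fun _ => 1) S z := by
  induction S using Finset.induction_on with
  | empty =>
    intro _ z hz
    rw [Cconv_empty, Asum_empty, Asum_empty]
  | insert q S hq ih =>
    intro h1 z hz
    have ih' := ih (fun p hp => h1 p (Finset.mem_insert_of_mem hp))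
    have hqm := Finset.mem_insert_self q S
    rw [Cconv_insert _ _ S q hq (h1 q hqm), Asum_insert _ S q hq (h1 q hqm)]
    have i1 := ih' z hz
    have i2 := ih' (z / q) (by positivity)
    have := Cconv_nonneg (fun _ => 1) (fun _ => 1) S (z / q / q) (by simp) (by simp)
    linarith

end AsumIneq

section AsumLower

theorem rad_sum_le (U : Finset ℕ) (hU : ∀ p ∈ U, p.Prime) (F : Finset ℕ)
    (hF : ∀ n ∈ F, n ≠ 0 ∧ n.primeFactors = U) :
    ∑ n ∈ F, (1 : ℝ) / n ≤ ∏ p ∈ U, (1 : ℝ) / (p - 1) := by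
  let f : ℕ →* ℝ :=
    { toFun := fun n => 1 / n
      map_one' := by simp
      map_mul' := by intro a b; push_cast; rw [one_div_mul_one_div] }
  have hf : ∀ n, f n = 1 / (n : ℝ) := fun n => rfl
  have hlt : ∀ {p : ℕ}, p.Prime → ‖f p‖ < 1 := by
    intro p hp
    have : (1 : ℝ) < p := by exact_mod_cast hp.one_lt
    rw [hf, Real.norm_of_nonneg (by positivity)]
    rw [div_lt_one (by linarith)]; exact this
  have hs := (EulerProduct.summable_and_hasSum_factoredNumbers_prod_filter_prime_geometric hlt U).2
  rw [Finset.filter_true_of_mem hU] at hs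
  set P := ∏ p ∈ U, p with hP
  have hP0 : 0 < P := Finset.prod_pos fun p hp => (hU p hp).pos
  have hdvd : ∀ n ∈ F, P ∣ n := by
    intro n hn
    rw [hP, ← (hF n hn).2]
    exact Nat.prod_primeFactors_dvd n
  have hinj : Set.InjOn (fun n => n / P) (F : Set ℕ) := by
    intro a ha b hb h
    have h1 := Nat.div_mul_cancel (hdvd a ha)
    have h2 := Nat.div_mul_cancel (hdvd b hb)
    simp only at h
    rw [← h1, ← h2, h]
  set K := F.image (fun n => n / P) with hK
  have hKm : ∀ k ∈ K, k ∈ Nat.factoredNumbers U := by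
    intro k hk
    obtain ⟨n, hn, rfl⟩ := Finset.mem_image.1 hk
    apply Nat.mem_factoredNumbers_of_dvd (m := n)
    · exact Nat.mem_factoredNumbers_of_primeFactors_subset (hF n hn).1 (hF n hn).2.subset
    · exact Nat.div_dvd_of_dvd (hdvd n hn)
  have hle : ∑ k ∈ K, f k ≤ ∏ p ∈ U, (1 - f p)⁻¹ := by
    have h1 := Finset.sum_subtype_of_mem (s := K) (fun n => f n) hKm
    rw [← h1]
    apply sum_le_hasSum _ _ hs
    intro i _
    rw [hf]; positivity
  have e : ∑ n ∈ F, (1 : ℝ) / n = 1 / P * ∑ k ∈ K, f k := by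
    rw [hK, Finset.sum_image hinj, Finset.mul_sum]
    apply Finset.sum_congr rfl
    intro n hn
    rw [hf, one_div_mul_one_div, ← Nat.cast_mul, Nat.mul_div_cancel' (hdvd n hn)]
  rw [e]
  calc _ ≤ 1 / (P : ℝ) * ∏ p ∈ U, (1 - f p)⁻¹ := by gcongr
    _ = _ := by
      rw [hP]; push_cast
      rw [one_div, ← Finset.prod_inv_distrib, ← Finset.prod_mul_distrib]
      apply Finset.prod_congr rfl
      intro p hp
      have : (1 : ℝ) < p := by exact_mod_cast (hU p hp).one_lt
      have h0 : (p : ℝ) ≠ 0 := by linarith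
      have h1 : (p : ℝ) - 1 ≠ 0 := by linarith
      rw [hf, one_sub_div h0, inv_div]
      field_simp

noncomputable def alf (p : ℕ) : ℝ := 1 / ((p : ℝ) - 1)

theorem alf_nonneg (p : ℕ) (hp : 1 ≤ p) : 0 ≤ alf p := by
  unfold alf
  have : (1 : ℝ) ≤ p := by exact_mod_cast hp
  apply div_nonneg zero_le_one; linarith

theorem weighted_le (S : Finset ℕ) (hS : ∀ p ∈ S, p.Prime) (N : ℕ)
    (hSN : ∀ p, p.Prime → p ≤ N → p ∈ S) (φ : ℕ → ℝ) (h0 : ∀ n, 0 ≤ φ n)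
    (hanti : ∀ a b, 0 < a → a ≤ b → φ b ≤ φ a) :
    ∑ n ∈ Finset.Icc 1 N, φ n / n ≤ ∑ U ∈ S.powerset, (∏ p ∈ U, alf p) * φ (∏ p ∈ U, p) := by
  have hmaps : ∀ n ∈ Finset.Icc 1 N, n.primeFactors ∈ S.powerset := by
    intro n hn
    rw [Finset.mem_Icc] at hn
    rw [Finset.mem_powerset]
    intro p hp
    exact hSN p (Nat.prime_of_mem_primeFactors hp) ((Nat.le_of_mem_primeFactors hp).trans hn.2)
  rw [← Finset.sum_fiberwise_of_maps_to hmaps]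
  apply Finset.sum_le_sum
  intro U hU
  have hUp : ∀ p ∈ U, p.Prime := fun p hp => hS p (Finset.mem_powerset.1 hU hp)
  have hpos : 0 < ∏ p ∈ U, p := Finset.prod_pos fun p hp => (hUp p hp).pos
  calc _ ≤ ∑ n ∈ (Finset.Icc 1 N).filter (fun n => n.primeFactors = U),
        φ (∏ p ∈ U, p) * ((1 : ℝ) / n) := by
        apply Finset.sum_le_sum
        intro n hn
        rw [Finset.mem_filter, Finset.mem_Icc] at hn
        rw [div_eq_mul_one_div]
        have : ∏ p ∈ U, p ≤ n := by
          rw [← hn.2]; exact Nat.le_of_dvd hn.1.1 (Nat.prod_primeFactors_dvd n)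
        have := hanti _ _ hpos this
        gcongr
    _ ≤ _ := by
        rw [← Finset.mul_sum, mul_comm]
        have := rad_sum_le U hUp ((Finset.Icc 1 N).filter (fun n => n.primeFactors = U)) (by
          intro n hn
          rw [Finset.mem_filter, Finset.mem_Icc] at hn
          exact ⟨by omega, hn.2⟩)
        exact mul_le_mul_of_nonneg_right this (h0 _)

theorem log_le_Asum (S : Finset ℕ) (hS : ∀ p ∈ S, p.Prime) (z : ℝ) (hz : 0 ≤ z)
    (hSN : ∀ p : ℕ, p.Prime → (p : ℝ) ≤ z → p ∈ S) : Real.log z ≤ Asum alf S z := by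
  refine (log_le_harmonic_floor z hz).trans ?_
  rw [harmonic_eq_sum_Icc]
  push_cast
  have := weighted_le S hS ⌊z⌋₊ (fun p hp hle => hSN p hp ((Nat.le_floor_iff hz).1 hle))
    (fun n => if (n : ℝ) ≤ z then 1 else 0) (fun n => by split_ifs <;> norm_num)
    (by
      intro a b _ hab
      by_cases hb : (b : ℝ) ≤ z
      · have : (a : ℝ) ≤ z := le_trans (by exact_mod_cast hab) hb
        rw [if_pos hb, if_pos this]
      · rw [if_neg hb]; split_ifs <;> norm_num)
  have e : ∑ n ∈ Finset.Icc 1 ⌊z⌋₊, ((n : ℝ))⁻¹ =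
      ∑ n ∈ Finset.Icc 1 ⌊z⌋₊, (if (n : ℝ) ≤ z then (1 : ℝ) else 0) / n := by
    apply Finset.sum_congr rfl
    intro n hn
    rw [Finset.mem_Icc] at hn
    rw [if_pos ((Nat.le_floor_iff hz).1 hn.2), one_div]
  rw [e]
  refine this.trans (le_of_eq ?_)
  unfold Asum
  apply Finset.sum_congr rfl
  intro U hU
  by_cases h : ((∏ p ∈ U, p : ℕ) : ℝ) ≤ z
  · rw [if_pos h, if_pos h, mul_one]
  · rw [if_neg h, if_neg h, mul_zero]

theorem sum_log_div (z : ℝ) (hz : 1 ≤ z) :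
    (Real.log z) ^ 2 / 2 ≤ ∑ n ∈ Finset.Icc 1 ⌊z⌋₊, Real.log (z / n) / n := by
  have key : ∀ k : ℕ, k ≤ ⌊z⌋₊ → (Real.log z) ^ 2 / 2 - (Real.log (z / (k + 1))) ^ 2 / 2 ≤
      ∑ n ∈ Finset.Icc 1 k, Real.log (z / n) / n - 0 := by
    intro k
    induction k with
    | zero => intro _; simp
    | succ k ih =>
      intro hk
      have ih' := ih (by omega)
      rw [Finset.sum_Icc_succ_top (by omega)]
      have hz0 : 0 < z := by linarith
      have hkz : ((k + 1 : ℕ) : ℝ) ≤ z := (Nat.le_floor_iff hz0.le).1 hk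
      push_cast at hkz ⊢
      have hk1 : (0 : ℝ) < k + 1 := by positivity
      set a := Real.log (z / (k + 1)) with ha
      set b := Real.log (z / (k + 1 + 1)) with hb
      have ha0 : 0 ≤ a := Real.log_nonneg (by rw [le_div_iff₀ hk1]; linarith)
      have hab : a - b ≤ 1 / (k + 1) := by
        rw [ha, hb, Real.log_div hz0.ne' hk1.ne', Real.log_div hz0.ne' (by positivity)]
        have : Real.log ((k + 1 + 1) / (k + 1)) ≤ (k + 1 + 1) / (k + 1) - 1 :=
          Real.log_le_sub_one_of_pos (by positivity)
        rw [Real.log_div (by positivity) hk1.ne'] at this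
        have e : ((k : ℝ) + 1 + 1) / (k + 1) - 1 = 1 / (k + 1) := by field_simp; ring
        linarith
      have hba : b ≤ a := by
        rw [ha, hb]
        apply Real.log_le_log (by positivity)
        gcongr; linarith
      have h1 : a ^ 2 / 2 - b ^ 2 / 2 ≤ a / (k + 1) := by
        rw [div_eq_mul_one_div a]
        nlinarith [mul_nonneg ha0 (sub_nonneg.2 hab), sq_nonneg (a - b)]
      linarith
  have hz0 : 0 < z := by linarith
  obtain ⟨j, hj⟩ : ∃ j, ⌊z⌋₊ = j + 1 := ⟨⌊z⌋₊ - 1, by have := Nat.floor_pos.2 hz; omega⟩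
  -- use k = j, then the last term directly
  have h1 := key j (by omega)
  rw [hj, Finset.sum_Icc_succ_top (by omega)]
  have hlt : z < j + 1 + 1 := by have := Nat.lt_floor_add_one z; rw [hj] at this; push_cast at this; exact this
  have hle : (j : ℝ) + 1 ≤ z := by have := Nat.floor_le hz0.le; rw [hj] at this; push_cast at this; exact this
  have hj1 : (0 : ℝ) < j + 1 := by positivity
  push_cast
  set a := Real.log (z / (j + 1)) with ha
  have ha0 : 0 ≤ a := Real.log_nonneg (by rw [le_div_iff₀ hj1]; linarith)
  have ha1 : a ≤ 1 / (j + 1) := by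
    have : a ≤ z / (j + 1) - 1 := Real.log_le_sub_one_of_pos (by positivity)
    have h2 : z / (j + 1) - 1 ≤ 1 / (j + 1) := by
      rw [div_sub_one hj1.ne']; gcongr; linarith
    linarith
  have : a ^ 2 / 2 ≤ a / (j + 1) := by
    rw [div_eq_mul_one_div a]
    nlinarith [mul_nonneg ha0 (sub_nonneg.2 ha1), sq_nonneg a]
  linarith

noncomputable def bet (p : ℕ) : ℝ := (1 + alf p) * (1 + alf p) - 1

theorem bet_nonneg (p : ℕ) (hp : 1 ≤ p) : 0 ≤ bet p := by
  have := alf_nonneg p hp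
  unfold bet; nlinarith

theorem log_sq_le_Asum (S : Finset ℕ) (hS : ∀ p ∈ S, p.Prime) (z : ℝ) (hz : 1 ≤ z)
    (hSN : ∀ p : ℕ, p.Prime → (p : ℝ) ≤ z → p ∈ S) : (Real.log z) ^ 2 / 2 ≤ Asum bet S z := by
  have hz0 : 0 ≤ z := by linarith
  have hα : ∀ p ∈ S, 0 ≤ alf p := fun p hp => alf_nonneg p (hS p hp).one_lt.le
  refine (sum_log_div z hz).trans ?_
  have h1 : ∑ n ∈ Finset.Icc 1 ⌊z⌋₊, Real.log (z / n) / n ≤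
      ∑ n ∈ Finset.Icc 1 ⌊z⌋₊, Asum alf S (z / n) / n := by
    apply Finset.sum_le_sum
    intro n hn
    rw [Finset.mem_Icc] at hn
    have hn1 : (1 : ℝ) ≤ n := by exact_mod_cast hn.1
    gcongr
    apply log_le_Asum S hS _ (by positivity)
    intro p hp hle
    exact hSN p hp (hle.trans (div_le_self hz0 hn1))
  refine h1.trans ?_
  have h2 := weighted_le S hS ⌊z⌋₊ (fun p hp hle => hSN p hp ((Nat.le_floor_iff hz0).1 hle))
    (fun n => Asum alf S (z / n)) (fun n => Asum_nonneg _ _ _ hα)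
    (by
      intro a b ha hab
      apply Asum_mono _ _ _ _ hα
      have : (0 : ℝ) < a := by exact_mod_cast ha
      gcongr)
  refine h2.trans ?_
  exact Cconv_le alf alf bet S (fun p hp => (hS p hp).one_lt.le) hα hα
    (fun p _ => by unfold bet; ring) z hz0

theorem Asum_one_le (S : Finset ℕ) (hS : ∀ p ∈ S, p.Prime) (y : ℝ) (hy : 0 ≤ y) :
    Asum (fun _ => 1) S y ≤ y := by
  unfold Asum
  simp only [Finset.prod_const_one]
  rw [Finset.sum_boole]
  have hinj : Set.InjOn (fun U : Finset ℕ => ∏ p ∈ U, p)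
      ((S.powerset.filter (fun U => ((∏ p ∈ U, p : ℕ) : ℝ) ≤ y) : Finset (Finset ℕ)) : Set (Finset ℕ)) := by
    intro U hU V hV h
    rw [Finset.mem_coe, Finset.mem_filter, Finset.mem_powerset] at hU hV
    have h1 := Nat.primeFactors_prod (s := U) fun p hp => hS p (hU.1 hp)
    have h2 := Nat.primeFactors_prod (s := V) fun p hp => hS p (hV.1 hp)
    simp only at h
    rw [← h1, ← h2, h]
  have : (S.powerset.filter (fun U => ((∏ p ∈ U, p : ℕ) : ℝ) ≤ y)).card ≤ (Finset.Icc 1 ⌊y⌋₊).card := by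
    apply Finset.card_le_card_of_injOn _ _ hinj
    intro U hU
    rw [Finset.mem_coe, Finset.mem_filter, Finset.mem_powerset] at hU
    rw [Finset.mem_coe, Finset.mem_Icc]
    exact ⟨Finset.prod_pos fun p hp => (hS p (hU.1 hp)).pos, (Nat.le_floor_iff hy).2 hU.2⟩
  rw [Nat.card_Icc, Nat.add_sub_cancel] at this
  exact le_trans (by exact_mod_cast this) (Nat.floor_le hy)

theorem Asum_two_bound (S : Finset ℕ) (hS : ∀ p ∈ S, p.Prime) (y : ℝ) (hy : 1 ≤ y) :
    Asum (fun _ => 2) S y ≤ y * (1 + Real.log y) := by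
  have hy0 : 0 ≤ y := by linarith
  refine (Asum_two_le S (fun p hp => (hS p hp).one_lt.le) y hy0).trans ?_
  unfold Cconv
  simp only [Finset.prod_const_one, one_mul]
  have hle : ∀ U ∈ S.powerset, Asum (fun _ => 1) S (y / ((∏ p ∈ U, p : ℕ) : ℝ)) ≤
      if ((∏ p ∈ U, p : ℕ) : ℝ) ≤ y then y / ((∏ p ∈ U, p : ℕ) : ℝ) else 0 := by
    intro U hU
    have hpos : (0 : ℝ) < ((∏ p ∈ U, p : ℕ) : ℝ) := by
      exact_mod_cast Finset.prod_pos fun p hp => (hS p (Finset.mem_powerset.1 hU hp)).pos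
    by_cases h : ((∏ p ∈ U, p : ℕ) : ℝ) ≤ y
    · rw [if_pos h]; exact Asum_one_le S hS _ (by positivity)
    · rw [if_neg h]
      unfold Asum
      apply Finset.sum_nonpos
      intro V hV
      have hV1 : (1 : ℝ) ≤ ((∏ p ∈ V, p : ℕ) : ℝ) := by
        exact_mod_cast Finset.prod_pos fun p hp => (hS p (Finset.mem_powerset.1 hV hp)).pos
      rw [if_neg]
      intro h2
      have := hV1.trans h2
      rw [le_div_iff₀ hpos] at this
      exact h (by linarith)
  refine (Finset.sum_le_sum hle).trans ?_
  rw [← Finset.sum_filter]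
  set B := S.powerset.filter (fun U => ((∏ p ∈ U, p : ℕ) : ℝ) ≤ y) with hB
  have hinj : Set.InjOn (fun U : Finset ℕ => ∏ p ∈ U, p) (B : Set (Finset ℕ)) := by
    intro U hU V hV h
    rw [Finset.mem_coe, hB, Finset.mem_filter, Finset.mem_powerset] at hU hV
    have h1 := Nat.primeFactors_prod (s := U) fun p hp => hS p (hU.1 hp)
    have h2 := Nat.primeFactors_prod (s := V) fun p hp => hS p (hV.1 hp)
    simp only at h
    rw [← h1, ← h2, h]
  have e : ∑ U ∈ B, y / ((∏ p ∈ U, p : ℕ) : ℝ) = ∑ n ∈ B.image (fun U => ∏ p ∈ U, p), y / (n : ℝ) := by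
    rw [Finset.sum_image hinj]
  rw [e]
  have hsub : B.image (fun U => ∏ p ∈ U, p) ⊆ Finset.Icc 1 ⌊y⌋₊ := by
    intro n hn
    obtain ⟨U, hU, rfl⟩ := Finset.mem_image.1 hn
    rw [hB, Finset.mem_filter, Finset.mem_powerset] at hU
    rw [Finset.mem_Icc]
    exact ⟨Finset.prod_pos fun p hp => (hS p (hU.1 hp)).pos, (Nat.le_floor_iff hy0).2 hU.2⟩
  refine (Finset.sum_le_sum_of_subset_of_nonneg hsub (fun n _ _ => by positivity)).trans ?_
  have := harmonic_floor_le_one_add_log y hy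
  rw [harmonic_eq_sum_Icc] at this
  push_cast at this
  simp only [div_eq_mul_inv]
  rw [← Finset.mul_sum]
  exact mul_le_mul_of_nonneg_left this hy0

end AsumLower

section SieveBound

/-- local factor in the singular series -/
noncomputable def rho (w m p : ℕ) : ℝ :=
  if p ≤ w then (1 - (omg m p : ℝ) / p) * ((1 + alf p) * (1 + alf p))
  else if p ∣ m then 1 + alf p else 1

theorem rho_nonneg (w m p : ℕ) (hp : p.Prime) : 0 ≤ rho w m p := by
  have h2 : (2 : ℝ) ≤ p := by exact_mod_cast hp.two_le
  have ha := alf_nonneg p hp.one_lt.le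
  have ho : (omg m p : ℝ) ≤ 2 := by exact_mod_cast omg_le m p
  unfold rho
  split_ifs
  · apply mul_nonneg
    · rw [sub_nonneg, div_le_one (by linarith)]; linarith
    · positivity
  · positivity
  · norm_num

theorem sieve_bound (m N w : ℕ) (hm : 2 ∣ m) (S : Finset ℕ) (hS : ∀ p ∈ S, p.Prime)
    (y z : ℝ) (hz : 1 < z) (W : ℕ) (hW : ∏ p ∈ (Finset.range (w + 1)).filter Nat.Prime, p ≤ W)
    (hyz : z * W ≤ y) (hSN : ∀ p : ℕ, p.Prime → (p : ℝ) ≤ z → p ∈ S) :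
    (((Finset.Ioc 0 N).filter (fun n => ∀ p ∈ S, ¬ p ∣ n * (m * n + 1))).card : ℝ) ≤
      N * (2 * (∏ p ∈ S, rho w m p) / (Real.log z) ^ 2) + (y * (1 + Real.log y)) ^ 2 := by
  have hW1 : 1 ≤ W := by
    refine le_trans ?_ hW
    apply Nat.succ_le_of_lt
    apply Finset.prod_pos
    intro p hp
    exact (Finset.mem_filter.1 hp).2.pos
  have hW1' : (1 : ℝ) ≤ W := by exact_mod_cast hW1
  have hz0 : 0 < z := by linarith
  have hy : 1 ≤ y := by nlinarith
  have hg0 : ∀ p ∈ S, 0 ≤ (omg m p : ℝ) / (p - omg m p) := by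
    intro p hp
    have h2 : (2 : ℝ) ≤ p := by exact_mod_cast (hS p hp).two_le
    have ho : (omg m p : ℝ) ≤ 2 := by exact_mod_cast omg_le m p
    apply div_nonneg (by positivity); linarith
  have h0 := selberg_sieve m N hm S hS y hy
  set g : ℕ → ℝ := fun p => (omg m p : ℝ) / (p - omg m p) with hg
  have hcmp : Asum bet S z ≤ (∏ p ∈ S, rho w m p) *
      Asum g S (z * ∏ p ∈ S, (((if p ≤ w then p else 1 : ℕ)) : ℝ)) := by
    apply Asum_compare bet g (rho w m) (fun p => if p ≤ w then p else 1) S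
    · exact fun p hp => (hS p hp).one_lt.le
    · exact fun p hp => bet_nonneg p (hS p hp).one_lt.le
    · exact hg0
    · exact fun p hp => rho_nonneg w m p (hS p hp)
    · intro p hp
      have h2 : (2 : ℝ) ≤ p := by exact_mod_cast (hS p hp).two_le
      have hp0 : (p : ℝ) ≠ 0 := by linarith
      have hp1 : (p : ℝ) - 1 ≠ 0 := by linarith
      have hal : 1 + alf p = p / (p - 1) := by unfold alf; field_simp; ring
      have hpo : (p : ℝ) - omg m p > 0 := by
        by_cases hd : p ∣ m
        · simp only [omg, if_pos hd]; push_cast; linarith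
        · simp only [omg, if_neg hd]; push_cast
          have : p ≠ 2 := by rintro rfl; exact hd hm
          have h3 : 2 < p := lt_of_le_of_ne (hS p hp).two_le (Ne.symm this)
          have : (2 : ℝ) < p := by exact_mod_cast h3
          linarith
      have hgp : 1 + g p = p / (p - omg m p) := by
        rw [hg]; field_simp; ring
      rw [hgp, show 1 + bet p = (1 + alf p) * (1 + alf p) by unfold bet; ring]
      unfold rho
      split_ifs with h1 h3
      · apply le_of_eq
        rw [one_sub_div hp0]
        field_simp
      · rw [hal]
        have : omg m p = 1 := by simp [omg, h3]
        rw [this, Nat.cast_one]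
      · rw [hal, one_mul]
        have : omg m p = 2 := by simp [omg, h3]
        rw [this] at hpo ⊢
        push_cast at hpo ⊢
        rw [div_mul_div_comm, div_le_div_iff₀ (by nlinarith) hpo]
        nlinarith
    · intro p hp
      have ha := alf_nonneg p (hS p hp).one_lt.le
      by_cases h1 : p ≤ w
      · right; rw [if_pos h1]
      · left
        refine ⟨?_, by rw [if_neg h1]⟩
        unfold rho
        rw [if_neg h1]
        split_ifs <;> linarith
    · exact hz0.le
  have hℓ : ∏ p ∈ S, (((if p ≤ w then p else 1 : ℕ)) : ℝ) ≤ W := by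
    rw [← Nat.cast_prod, ← Finset.prod_filter]
    refine le_trans ?_ (Nat.cast_le.2 hW)
    norm_cast
    apply Finset.prod_le_prod_of_subset_of_one_le'
    · intro p hp
      rw [Finset.mem_filter] at hp
      rw [Finset.mem_filter, Finset.mem_range]
      exact ⟨by omega, hS p hp.1⟩
    · intro p hp _
      exact (Finset.mem_filter.1 hp).2.one_lt.le
  have hmono : Asum g S (z * ∏ p ∈ S, (((if p ≤ w then p else 1 : ℕ)) : ℝ)) ≤ Asum g S y := by
    apply Asum_mono _ _ _ _ hg0
    refine le_trans ?_ hyz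
    gcongr
  have hρ0 : 0 ≤ ∏ p ∈ S, rho w m p := Finset.prod_nonneg fun p hp => rho_nonneg w m p (hS p hp)
  have hlow := log_sq_le_Asum S hS z hz.le hSN
  have hlz : 0 < Real.log z := Real.log_pos hz
  have hall : (Real.log z) ^ 2 / 2 ≤ (∏ p ∈ S, rho w m p) * Asum g S y :=
    hlow.trans (hcmp.trans (mul_le_mul_of_nonneg_left hmono hρ0))
  have hG0 : 0 < Asum g S y := by
    have h1 : 0 ≤ Asum g S y := Asum_nonneg _ _ _ hg0
    rcases h1.eq_or_lt with h | h
    · rw [← h, mul_zero] at hall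
      have : 0 < (Real.log z) ^ 2 / 2 := by positivity
      linarith
    · exact h
  refine h0.trans ?_
  apply add_le_add
  · rw [div_eq_mul_one_div]
    apply mul_le_mul_of_nonneg_left _ (by positivity)
    rw [div_le_div_iff₀ hG0 (by positivity)]
    linarith
  · have h1 := Asum_two_bound S hS y hy
    have h2 := Asum_nonneg (fun _ => 2) S y (fun p _ => by norm_num)
    gcongr

/-- counting prime pairs -/
theorem pair_count (m N w Y : ℕ) (hm : 2 ∣ m) (hm0 : 0 < m)
    (y z : ℝ) (hz : 1 < z) (W : ℕ) (hW : ∏ p ∈ (Finset.range (w + 1)).filter Nat.Prime, p ≤ W)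
    (hyz : z * W ≤ y) (hzY : z ≤ Y) :
    (((Finset.Ioc 0 N).filter (fun q => q.Prime ∧ (m * q + 1).Prime)).card : ℝ) ≤
      Y + (N * (2 * (∏ p ∈ (Finset.range (Y + 1)).filter Nat.Prime, rho w m p) / (Real.log z) ^ 2)
       + (y * (1 + Real.log y)) ^ 2) := by
  set S := (Finset.range (Y + 1)).filter Nat.Prime with hSdef
  have hS : ∀ p ∈ S, p.Prime := fun p hp => (Finset.mem_filter.1 hp).2
  have hb := sieve_bound m N w hm S hS y z hz W hW hyz (by
    intro p hp hle
    rw [hSdef, Finset.mem_filter, Finset.mem_range]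
    have : (p : ℝ) ≤ Y := hle.trans hzY
    have : p ≤ Y := by exact_mod_cast this
    exact ⟨by omega, hp⟩)
  have hcard : ((Finset.Ioc 0 N).filter (fun q => q.Prime ∧ (m * q + 1).Prime)).card ≤
      Y + ((Finset.Ioc 0 N).filter (fun n => ∀ p ∈ S, ¬ p ∣ n * (m * n + 1))).card := by
    have hsub : (Finset.Ioc 0 N).filter (fun q => q.Prime ∧ (m * q + 1).Prime) ⊆
        Finset.Ioc 0 Y ∪ ((Finset.Ioc 0 N).filter (fun n => ∀ p ∈ S, ¬ p ∣ n * (m * n + 1))) := by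
      intro q hq
      rw [Finset.mem_filter, Finset.mem_Ioc] at hq
      rw [Finset.mem_union, Finset.mem_Ioc, Finset.mem_filter, Finset.mem_Ioc]
      by_cases h : q ≤ Y
      · left; exact ⟨hq.1.1, h⟩
      · right
        refine ⟨hq.1, ?_⟩
        intro p hp hd
        have hpY : p ≤ Y := by
          rw [hSdef, Finset.mem_filter, Finset.mem_range] at hp; omega
        have hpp := hS p hp
        have hmq : q ≤ m * q := Nat.le_mul_of_pos_left q hm0
        rcases (hpp.dvd_mul).1 hd with h1 | h1
        · have := (Nat.prime_dvd_prime_iff_eq hpp hq.2.1).1 h1; omega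
        · have := (Nat.prime_dvd_prime_iff_eq hpp hq.2.2).1 h1; omega
    refine (Finset.card_le_card hsub).trans ((Finset.card_union_le _ _).trans ?_)
    rw [Nat.card_Ioc]; omega
  have : (((Finset.Ioc 0 N).filter (fun q => q.Prime ∧ (m * q + 1).Prime)).card : ℝ) ≤
      Y + (((Finset.Ioc 0 N).filter (fun n => ∀ p ∈ S, ¬ p ∣ n * (m * n + 1))).card : ℝ) := by
    exact_mod_cast hcard
  linarith

end SieveBound

section Averaging

noncomputable def hh (w p : ℕ) : ℝ := if p ≤ w then 1 / ((p : ℝ) - 2) else 1 / ((p : ℝ) - 1)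
noncomputable def rzero (w p : ℕ) : ℝ :=
  if p ≤ w then (p : ℝ) * (p - 2) / ((p - 1) * (p - 1)) else 1

theorem rho_eq (w m p : ℕ) (hp : 3 ≤ p) :
    rho w m p = rzero w p * (1 + if p ∣ m then hh w p else 0) := by
  have h3 : (3 : ℝ) ≤ p := by exact_mod_cast hp
  have hp0 : (p : ℝ) ≠ 0 := by linarith
  have hp1 : (p : ℝ) - 1 ≠ 0 := by linarith
  have hp2 : (p : ℝ) - 2 ≠ 0 := by linarith
  unfold rho rzero hh alf omg
  by_cases h1 : p ≤ w <;> by_cases h2 : p ∣ m <;> simp only [h1, h2, if_true, if_false]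
  · push_cast; field_simp; ring
  · push_cast; field_simp; ring
  · simp
  · simp

theorem hh_nonneg (w p : ℕ) (hp : 3 ≤ p) : 0 ≤ hh w p := by
  have h3 : (3 : ℝ) ≤ p := by exact_mod_cast hp
  unfold hh
  split_ifs <;> apply div_nonneg zero_le_one <;> linarith

theorem rzero_nonneg (w p : ℕ) (hp : 3 ≤ p) : 0 ≤ rzero w p := by
  have h3 : (3 : ℝ) ≤ p := by exact_mod_cast hp
  unfold rzero
  split_ifs
  · apply div_nonneg
    · apply mul_nonneg <;> linarith
    · apply mul_nonneg <;> linarith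
  · norm_num

theorem rzero_hh (w p : ℕ) (hp : 3 ≤ p) :
    rzero w p * (1 + hh w p / p) = 1 + if p ≤ w then 0 else 1 / ((p : ℝ) * (p - 1)) := by
  have h3 : (3 : ℝ) ≤ p := by exact_mod_cast hp
  have hp0 : (p : ℝ) ≠ 0 := by linarith
  have hp1 : (p : ℝ) - 1 ≠ 0 := by linarith
  have hp2 : (p : ℝ) - 2 ≠ 0 := by linarith
  unfold rzero hh
  by_cases h1 : p ≤ w <;> simp only [h1, if_true, if_false]
  · field_simp; ring
  · field_simp

theorem tele_sum (w Y : ℕ) (hw : 1 ≤ w) :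
    ∑ n ∈ Finset.Ioc w Y, 1 / ((n : ℝ) * (n - 1)) ≤ 1 / w := by
  have hw' : (1 : ℝ) ≤ w := by exact_mod_cast hw
  by_cases h : w ≤ Y
  · have : ∑ n ∈ Finset.Ioc w Y, 1 / ((n : ℝ) * (n - 1)) = 1 / w - 1 / Y := by
      induction Y, h using Nat.le_induction with
      | base => simp
      | succ k hk ih =>
        rw [Finset.sum_Ioc_succ_top (by omega), ih]
        have : (1 : ℝ) ≤ k := by exact_mod_cast (by omega : 1 ≤ k)
        have h0 : (k : ℝ) ≠ 0 := by linarith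
        have h1 : (k : ℝ) + 1 ≠ 0 := by linarith
        have hw0 : (w : ℝ) ≠ 0 := by linarith
        push_cast
        rw [add_sub_cancel_right]
        field_simp
        ring
    rw [this]
    have : (0 : ℝ) ≤ 1 / Y := by positivity
    linarith
  · rw [Finset.Ioc_eq_empty (by omega)]
    simp

theorem avg_rho (w Y M : ℕ) (hw : 2 ≤ w) (hY : 2 ≤ Y) (f : ℕ → ℝ) (hf : ∀ n, 0 ≤ f n) (K : ℝ)
    (hK0 : 0 ≤ K)
    (hK : ∀ D : ℕ, 1 ≤ D → ∑ m ∈ (Finset.Icc 1 M).filter (fun m => D ∣ m), f m ≤ K / D) :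
    ∑ m ∈ (Finset.Icc 1 M).filter (fun m => 2 ∣ m),
      (∏ p ∈ (Finset.range (Y + 1)).filter Nat.Prime, rho w m p) * f m ≤ K * Real.exp (1 / w) := by
  set S := (Finset.range (Y + 1)).filter Nat.Prime with hSdef
  set S' := S.erase 2 with hS'
  have h2S : 2 ∈ S := by
    rw [hSdef, Finset.mem_filter, Finset.mem_range]; exact ⟨by omega, Nat.prime_two⟩
  have hS'p : ∀ p ∈ S', p.Prime ∧ 3 ≤ p ∧ p ≤ Y := by
    intro p hp
    rw [hS', Finset.mem_erase, hSdef, Finset.mem_filter, Finset.mem_range] at hp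
    have := hp.2.2.two_le
    exact ⟨hp.2.2, by omega, by omega⟩
  set R := ∏ p ∈ S', rzero w p with hR
  have hR0 : 0 ≤ R := Finset.prod_nonneg fun p hp => rzero_nonneg w p (hS'p p hp).2.1
  have hprod : ∀ m ∈ (Finset.Icc 1 M).filter (fun m => 2 ∣ m), ∏ p ∈ S, rho w m p =
      2 * R * ∑ U ∈ S'.powerset, ∏ p ∈ U, (if p ∣ m then hh w p else 0) := by
    intro m hm
    have hm2 := (Finset.mem_filter.1 hm).2
    rw [← Finset.mul_prod_erase S _ h2S, ← hS']
    have e1 : rho w m 2 = 2 := by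
      unfold rho alf omg
      rw [if_pos hw, if_pos hm2]; norm_num
    rw [e1, Finset.prod_congr rfl fun p hp => rho_eq w m p (hS'p p hp).2.1,
      Finset.prod_mul_distrib, Finset.prod_one_add, mul_assoc]
  rw [Finset.sum_congr rfl fun m hm => by rw [hprod m hm]]
  have hind : ∀ U ∈ S'.powerset, ∀ m ∈ (Finset.Icc 1 M).filter (fun m => 2 ∣ m),
      (∏ p ∈ U, (if p ∣ m then hh w p else 0)) ≤
      (∏ p ∈ U, hh w p) * (if 2 * ∏ p ∈ U, p ∣ m then 1 else 0) := by
    intro U hU m hm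
    have hm2 := (Finset.mem_filter.1 hm).2
    have hU' := Finset.mem_powerset.1 hU
    by_cases hall : ∀ p ∈ U, p ∣ m
    · have hd : ∏ p ∈ U, p ∣ m := Finset.prod_primes_dvd m
        (fun p hp => (hS'p p (hU' hp)).1.prime) hall
      have hcop : Nat.Coprime 2 (∏ p ∈ U, p) := by
        apply Nat.Coprime.prod_right
        intro p hp
        have := hS'p p (hU' hp)
        exact (Nat.coprime_primes Nat.prime_two this.1).2 (by omega)
      have hd2 : 2 * ∏ p ∈ U, p ∣ m := hcop.mul_dvd_of_dvd_of_dvd hm2 hd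
      rw [if_pos hd2, mul_one]
      apply le_of_eq
      apply Finset.prod_congr rfl
      intro p hp
      rw [if_pos (hall p hp)]
    · push Not at hall
      obtain ⟨p, hp, hpm⟩ := hall
      rw [Finset.prod_eq_zero hp (if_neg hpm)]
      apply mul_nonneg
      · exact Finset.prod_nonneg fun p hp => hh_nonneg w p (hS'p p (hU' hp)).2.1
      · split_ifs <;> norm_num
  have hE : ∀ D : ℕ, ∑ m ∈ (Finset.Icc 1 M).filter (fun m => 2 ∣ m),
      (if 2 * D ∣ m then (1 : ℝ) else 0) * f m =
      ∑ m ∈ (Finset.Icc 1 M).filter (fun m => 2 * D ∣ m), f m := by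
    intro D
    rw [Finset.sum_filter, Finset.sum_filter]
    apply Finset.sum_congr rfl
    intro m _
    by_cases h : 2 * D ∣ m
    · have h2 : 2 ∣ m := (Dvd.intro _ rfl).trans h
      rw [if_pos h2, if_pos h, if_pos h, one_mul]
    · rw [if_neg h, if_neg h, zero_mul]; simp
  calc ∑ m ∈ (Finset.Icc 1 M).filter (fun m => 2 ∣ m),
        (2 * R * ∑ U ∈ S'.powerset, ∏ p ∈ U, (if p ∣ m then hh w p else 0)) * f m
      ≤ ∑ m ∈ (Finset.Icc 1 M).filter (fun m => 2 ∣ m),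
        (2 * R * ∑ U ∈ S'.powerset, (∏ p ∈ U, hh w p) * (if 2 * ∏ p ∈ U, p ∣ m then 1 else 0)) * f m := by
        apply Finset.sum_le_sum
        intro m hm
        apply mul_le_mul_of_nonneg_right _ (hf m)
        apply mul_le_mul_of_nonneg_left _ (by positivity)
        exact Finset.sum_le_sum fun U hU => hind U hU m hm
    _ = 2 * R * ∑ U ∈ S'.powerset, (∏ p ∈ U, hh w p) *
          ∑ m ∈ (Finset.Icc 1 M).filter (fun m => 2 * ∏ p ∈ U, p ∣ m), f m := by
        simp only [← hE, Finset.mul_sum, Finset.sum_mul]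
        rw [Finset.sum_comm]
        apply Finset.sum_congr rfl
        intro U _
        apply Finset.sum_congr rfl
        intro m _
        ring
    _ ≤ 2 * R * ∑ U ∈ S'.powerset, (∏ p ∈ U, hh w p) * (K / ((2 * ∏ p ∈ U, p : ℕ) : ℝ)) := by
        apply mul_le_mul_of_nonneg_left _ (by positivity)
        apply Finset.sum_le_sum
        intro U hU
        have hU' := Finset.mem_powerset.1 hU
        apply mul_le_mul_of_nonneg_left
        · apply hK
          have : 0 < ∏ p ∈ U, p := Finset.prod_pos fun p hp => (hS'p p (hU' hp)).1.pos
          omega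
        · exact Finset.prod_nonneg fun p hp => hh_nonneg w p (hS'p p (hU' hp)).2.1
    _ = K * (R * ∑ U ∈ S'.powerset, ∏ p ∈ U, (hh w p / p)) := by
        simp only [Finset.mul_sum]
        apply Finset.sum_congr rfl
        intro U _
        rw [Finset.prod_div_distrib]
        push_cast
        rw [← div_div, div_eq_mul_inv _ (∏ p ∈ U, (p : ℝ)), div_eq_mul_inv _ (∏ p ∈ U, (p : ℝ))]
        ring
    _ = K * ∏ p ∈ S', (1 + if p ≤ w then 0 else 1 / ((p : ℝ) * (p - 1))) := by
        rw [← Finset.prod_one_add, hR, ← Finset.prod_mul_distrib]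
        congr 1
        exact Finset.prod_congr rfl fun p hp => rzero_hh w p (hS'p p hp).2.1
    _ ≤ K * Real.exp (1 / w) := by
        apply mul_le_mul_of_nonneg_left _ hK0
        calc _ ≤ ∏ p ∈ S', Real.exp (if p ≤ w then 0 else 1 / ((p : ℝ) * (p - 1))) := by
              apply Finset.prod_le_prod
              · intro p hp
                have h3 : (3 : ℝ) ≤ p := by exact_mod_cast (hS'p p hp).2.1
                split_ifs
                · norm_num
                · have : 0 ≤ 1 / ((p : ℝ) * (p - 1)) := by
                    apply div_nonneg zero_le_one
                    apply mul_nonneg <;> linarith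
                  linarith
              · intro p _
                rw [add_comm]; exact Real.add_one_le_exp _
          _ = Real.exp (∑ p ∈ S', (if p ≤ w then 0 else 1 / ((p : ℝ) * (p - 1)))) := by
              rw [Real.exp_sum]
          _ ≤ _ := by
              apply Real.exp_le_exp.2
              refine le_trans ?_ (tele_sum w Y (by omega))
              have : ∑ p ∈ S', (if p ≤ w then 0 else 1 / ((p : ℝ) * (p - 1))) =
                  ∑ p ∈ S'.filter (fun p => ¬ p ≤ w), 1 / ((p : ℝ) * (p - 1)) := by
                rw [Finset.sum_filter]
                apply Finset.sum_congr rfl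
                intro p _
                by_cases h : p ≤ w <;> simp [h]
              rw [this]
              apply Finset.sum_le_sum_of_subset_of_nonneg
              · intro p hp
                rw [Finset.mem_filter] at hp
                have := hS'p p hp.1
                rw [Finset.mem_Ioc]; omega
              · intro n hn _
                rw [Finset.mem_Ioc] at hn
                have : (1 : ℝ) ≤ n := by exact_mod_cast (by omega : 1 ≤ n)
                apply div_nonneg zero_le_one
                apply mul_nonneg <;> linarith

end Averaging

section LogSum

theorem sum_log_bound (x L : ℝ) (M : ℕ) (hL : 1 ≤ L) (hx : 1 < x) (hLx : L ≤ Real.log x)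
    (hM : ∀ m : ℕ, 1 ≤ m → m ≤ M → L ≤ Real.log (x / m)) (D : ℕ) (hD : 1 ≤ D) :
    ∑ m ∈ (Finset.Icc 1 M).filter (fun m => D ∣ m), 1 / ((m : ℝ) * (Real.log (x / m)) ^ 2) ≤
      (1 / L ^ 2 + (1 + 1 / L) * (1 / L - 1 / Real.log x)) / D := by
  have hL0 : 0 < L := by linarith
  have hD' : (1 : ℝ) ≤ D := by exact_mod_cast hD
  have hD0 : (0 : ℝ) < D := by linarith
  have hx0 : 0 < x := by linarith
  have himg : (Finset.Icc 1 M).filter (fun m => D ∣ m) = (Finset.Icc 1 (M / D)).image (fun k => D * k) := by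
    ext m
    rw [Finset.mem_filter, Finset.mem_image, Finset.mem_Icc]
    constructor
    · rintro ⟨⟨h1, h2⟩, k, rfl⟩
      refine ⟨k, ?_, rfl⟩
      rw [Finset.mem_Icc]
      exact ⟨Nat.pos_of_mul_pos_left h1, (Nat.le_div_iff_mul_le hD).2 (by rw [mul_comm]; exact h2)⟩
    · rintro ⟨k, hk, rfl⟩
      rw [Finset.mem_Icc] at hk
      refine ⟨⟨Nat.mul_pos hD hk.1, ?_⟩, Dvd.intro _ rfl⟩
      have := (Nat.le_div_iff_mul_le hD).1 hk.2
      rw [mul_comm]; exact this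
  rw [himg, Finset.sum_image (by intro a _ b _ h; exact Nat.eq_of_mul_eq_mul_left hD h)]
  have hℓ : ∀ k : ℕ, 1 ≤ k → k ≤ M / D → L ≤ Real.log (x / (D * k)) := by
    intro k h1 h2
    have := hM (D * k) (Nat.mul_pos hD h1) (by
      have := (Nat.le_div_iff_mul_le hD).1 h2
      rw [mul_comm]; exact this)
    push_cast at this; exact this
  have hR0 : 0 ≤ 1 / L - 1 / Real.log x := by
    rw [sub_nonneg]; exact one_div_le_one_div_of_le hL0 hLx
  have key : ∀ j : ℕ, 1 ≤ j → j ≤ M / D →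
      ∑ k ∈ Finset.Icc 1 j, 1 / ((k : ℝ) * (Real.log (x / (D * k))) ^ 2) ≤
      1 / L ^ 2 + (1 + 1 / L) * (1 / Real.log (x / (D * j)) - 1 / Real.log (x / D)) := by
    intro j hj
    induction j, hj using Nat.le_induction with
    | base =>
      intro h
      have h1 := hℓ 1 le_rfl h
      simp only [Finset.Icc_self, Finset.sum_singleton, Nat.cast_one, mul_one, one_mul, sub_self, mul_zero, add_zero] at h1 ⊢
      gcongr
    | succ k hk ih =>
      intro h
      have ih' := ih (by omega)
      rw [Finset.sum_Icc_succ_top (by omega)]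
      have ha := hℓ k hk (by omega)
      have hb := hℓ (k + 1) (by omega) h
      have hk1 : (1 : ℝ) ≤ k := by exact_mod_cast hk
      have hk0 : (0 : ℝ) < k := by linarith
      push_cast at hb ⊢
      set a := Real.log (x / (D * k)) with hadef
      set b := Real.log (x / (D * (k + 1))) with hbdef
      have hb0 : 0 < b := by linarith
      have ha0 : 0 < a := by linarith
      have hab : a - b = Real.log ((k + 1) / k) := by
        rw [hadef, hbdef, ← Real.log_div (by positivity) (by positivity)]
        congr 1; field_simp
      have hd1 : a - b ≤ 1 := by
        rw [hab]
        have : Real.log ((k + 1) / k) ≤ (k + 1) / k - 1 := Real.log_le_sub_one_of_pos (by positivity)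
        have h2 : ((k : ℝ) + 1) / k - 1 = 1 / k := by field_simp; ring
        have h3 : 1 / (k : ℝ) ≤ 1 := by rw [div_le_one hk0]; exact hk1
        linarith
      have hd2 : 1 / ((k : ℝ) + 1) ≤ a - b := by
        rw [hab]
        have : Real.log (k / (k + 1)) ≤ k / (k + 1) - 1 := Real.log_le_sub_one_of_pos (by positivity)
        rw [Real.log_div (by positivity) (by positivity)] at this ⊢
        have h2 : (k : ℝ) / (k + 1) - 1 = - (1 / (k + 1)) := by field_simp; ring
        linarith
      have hal : a ≤ (1 + 1 / L) * b := by
        have : 1 ≤ b / L := by rw [le_div_iff₀ hL0]; linarith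
        have e : (1 + 1 / L) * b = b + b / L := by ring
        linarith
      have h1 : 1 / (((k : ℝ) + 1) * b ^ 2) ≤ (1 + 1 / L) * (1 / b - 1 / a) := by
        have e1 : 1 / b - 1 / a = (a - b) / (a * b) := by field_simp
        rw [e1, ← mul_div_assoc, ← one_div_mul_one_div, mul_one_div, div_le_div_iff₀ (by positivity) (by positivity)]
        calc 1 / ((k : ℝ) + 1) * (a * b) ≤ (a - b) * ((1 + 1 / L) * b * b) := by
              gcongr
              linarith [(by positivity : (0:ℝ) < 1 / ((k : ℝ) + 1))]
          _ = _ := by ring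
      have e2 : (1 + 1 / L) * (1 / b - 1 / Real.log (x / D)) =
        (1 + 1 / L) * (1 / b - 1 / a) + (1 + 1 / L) * (1 / a - 1 / Real.log (x / D)) := by ring
      linarith
  have hfin : ∑ k ∈ Finset.Icc 1 (M / D), 1 / ((k : ℝ) * (Real.log (x / (D * k))) ^ 2) ≤
      1 / L ^ 2 + (1 + 1 / L) * (1 / L - 1 / Real.log x) := by
    rcases Nat.eq_zero_or_pos (M / D) with h | h
    · rw [h]; simp only [Finset.Icc_eq_empty (show ¬ (1 : ℕ) ≤ 0 by omega), Finset.sum_empty]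
      positivity
    · refine (key (M / D) h le_rfl).trans ?_
      have h1 := hℓ (M / D) h le_rfl
      have h2 := hℓ 1 le_rfl h
      rw [Nat.cast_one, mul_one] at h2
      have h3 : Real.log (x / D) ≤ Real.log x := by
        apply Real.log_le_log (by positivity)
        exact div_le_self hx0.le hD'
      have h4 : 1 / Real.log x ≤ 1 / Real.log (x / D) := one_div_le_one_div_of_le (by linarith) h3
      have h5 := one_div_le_one_div_of_le hL0 h1
      have h6 : (1 + 1 / L) * (1 / Real.log (x / (D * ((M / D : ℕ) : ℝ))) - 1 / Real.log (x / D)) ≤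
          (1 + 1 / L) * (1 / L - 1 / Real.log x) := by
        apply mul_le_mul_of_nonneg_left _ (by positivity)
        linarith
      linarith
  calc _ = (∑ k ∈ Finset.Icc 1 (M / D), 1 / ((k : ℝ) * (Real.log (x / (D * k))) ^ 2)) / (D : ℝ) := by
        rw [Finset.sum_div]
        apply Finset.sum_congr rfl
        intro k _
        push_cast
        rw [div_div]; congr 1; ring
    _ ≤ _ := by gcongr

end LogSum

section TReduction

theorem T_le_sum (c : ℝ) (hc1 : 8 / 9 ≤ c) (hc2 : c < 1) (x : ℝ) (hx : 1 ≤ x) :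
    (T c x : ℝ) ≤ ∑ m ∈ (Finset.Icc 1 ⌊x ^ (1 - c)⌋₊).filter (fun m => 2 ∣ m),
      (((Finset.Ioc 0 ⌊x / m⌋₊).filter (fun q => q.Prime ∧ (m * q + 1).Prime)).card : ℝ) := by
  have hx0 : 0 ≤ x := by linarith
  have hsub : (Finset.range (⌊x⌋₊ + 1)).filter
      (fun p : ℕ => p.Prime ∧ (p : ℝ) ^ c ≤ (Pplus (p - 1) : ℝ)) ⊆
      ((Finset.Icc 1 ⌊x ^ (1 - c)⌋₊).filter (fun m => 2 ∣ m)).biUnion (fun m =>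
        ((Finset.Ioc 0 ⌊x / m⌋₊).filter (fun q => q.Prime ∧ (m * q + 1).Prime)).image
          (fun q => m * q + 1)) := by
    intro p hp
    rw [Finset.mem_filter, Finset.mem_range] at hp
    obtain ⟨hpx, hpp, hpc⟩ := hp
    have hpx' : (p : ℝ) ≤ x := (Nat.le_floor_iff hx0).1 (by omega)
    have hp2 : p ≠ 2 := by
      rintro rfl
      have e : Pplus (2 - 1) = 1 := by unfold Pplus; norm_num
      rw [e] at hpc
      have : (1 : ℝ) < (2 : ℝ) ^ c := Real.one_lt_rpow (by norm_num) (by linarith)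
      push_cast at hpc
      linarith
    have hp3 : 3 ≤ p := by have := hpp.two_le; omega
    have hp3' : (3 : ℝ) ≤ p := by exact_mod_cast hp3
    have hp0 : (0 : ℝ) < p := by linarith
    have hpodd : 2 ∣ p - 1 := by
      have := (hpp.eq_two_or_odd').resolve_left hp2
      obtain ⟨k, hk⟩ := this
      exact ⟨k, by omega⟩
    have hne : (p - 1).primeFactors.Nonempty := Nat.nonempty_primeFactors.2 (by omega)
    obtain ⟨q, hq, hqe⟩ := Finset.exists_mem_eq_sup _ hne id
    have hPq : Pplus (p - 1) = q := by
      unfold Pplus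
      rw [if_neg (by omega), hqe]; rfl
    rw [hPq] at hpc
    have hqp := Nat.prime_of_mem_primeFactors hq
    have hqd := Nat.dvd_of_mem_primeFactors hq
    have hq0 : (0 : ℝ) < q := by exact_mod_cast hqp.pos
    have hq2 : q ≠ 2 := by
      rintro rfl
      have h1 : (3 : ℝ) ^ (8 / 9 : ℝ) ≤ (p : ℝ) ^ c := by
        calc (3 : ℝ) ^ (8 / 9 : ℝ) ≤ (3 : ℝ) ^ c := Real.rpow_le_rpow_of_exponent_le (by norm_num) hc1
          _ ≤ _ := Real.rpow_le_rpow (by norm_num) hp3' (by linarith)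
      have h2 : (3 : ℝ) ^ (8 / 9 : ℝ) ≤ 2 := by push_cast at hpc; linarith
      have h3 : ((3 : ℝ) ^ (8 / 9 : ℝ)) ^ (9 : ℕ) ≤ 2 ^ 9 := by gcongr
      rw [← Real.rpow_natCast, ← Real.rpow_mul (by norm_num)] at h3
      norm_num at h3
    obtain ⟨m, hm⟩ := hqd
    have hm0 : 0 < m := by
      rcases Nat.eq_zero_or_pos m with h | h
      · rw [h] at hm; omega
      · exact h
    have hpm : p = m * q + 1 := by rw [mul_comm]; omega
    have hm0' : (0 : ℝ) < m := by exact_mod_cast hm0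
    have hmq : (m : ℝ) * q ≤ p := by rw [hpm]; push_cast; linarith
    rw [Finset.mem_biUnion]
    refine ⟨m, ?_, ?_⟩
    · rw [Finset.mem_filter, Finset.mem_Icc]
      refine ⟨⟨hm0, ?_⟩, ?_⟩
      · rw [Nat.le_floor_iff (by positivity)]
        have h1 : (m : ℝ) ≤ (p : ℝ) ^ (1 - c) := by
          rw [Real.rpow_sub hp0, Real.rpow_one, le_div_iff₀ (by positivity)]
          calc (m : ℝ) * (p : ℝ) ^ c ≤ m * q := by gcongr
            _ ≤ p := hmq
        exact h1.trans (Real.rpow_le_rpow hp0.le hpx' (by linarith))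
      · rw [hm] at hpodd
        rcases (Nat.prime_two.dvd_mul).1 hpodd with h | h
        · exact absurd ((Nat.prime_dvd_prime_iff_eq Nat.prime_two hqp).1 h).symm hq2
        · exact h
    · rw [Finset.mem_image]
      refine ⟨q, ?_, hpm.symm⟩
      rw [Finset.mem_filter, Finset.mem_Ioc]
      refine ⟨⟨hqp.pos, ?_⟩, hqp, by rw [← hpm]; exact hpp⟩
      rw [Nat.le_floor_iff (by positivity), le_div_iff₀ hm0', mul_comm]
      exact hmq.trans hpx'
  have h1 := Finset.card_le_card hsub
  have h2 := h1.trans (Finset.card_biUnion_le.trans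
    (Finset.sum_le_sum fun m _ => Finset.card_image_le))
  unfold T
  exact_mod_cast h2

end TReduction

section TBound

noncomputable def Wp (w : ℕ) : ℕ := ∏ p ∈ (Finset.range (w + 1)).filter Nat.Prime, p

theorem Wp_pos (w : ℕ) : 0 < Wp w := by
  unfold Wp
  apply Finset.prod_pos
  intro p hp
  exact (Finset.mem_filter.1 hp).2.pos

noncomputable def Kf (c l : ℝ) : ℝ :=
  1 / (c * l) ^ 2 + (1 + 1 / (c * l)) * (1 / (c * l) - 1 / l)

set_option maxHeartbeats 1000000 in
theorem T_bound_explicit (c : ℝ) (hc1 : 8 / 9 ≤ c) (hc2 : c < 1) (w : ℕ) (hw : 2 ≤ w) (δ : ℝ)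
    (hδ0 : 0 < δ) (hδ : 4 * δ < 1) (x : ℝ) (hx : 4 ≤ x) (hcx : 1 ≤ c * Real.log x)
    (hWx : 2 * Real.log (Wp w) ≤ δ * Real.log x) :
    (T c x : ℝ) ≤ 2 * Real.sqrt x * x ^ (1 - c)
      + 8 / (1 - 4 * δ) ^ 2 * x * (Kf c (Real.log x) * Real.exp (1 / w))
      + x * Real.exp (- (δ * Real.log x)) * (1 + Real.log x) ^ 3 := by
  have hx0 : 0 < x := by linarith
  have hx1 : 1 < x := by linarith
  have hl0 : 0 < Real.log x := Real.log_pos hx1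
  refine (T_le_sum c hc1 hc2 x (by linarith)).trans ?_
  set M := ⌊x ^ (1 - c)⌋₊ with hMdef
  have hMle : (M : ℝ) ≤ x ^ (1 - c) := Nat.floor_le (by positivity)
  set L := c * Real.log x with hLdef
  have hLx : L ≤ Real.log x := by rw [hLdef]; nlinarith
  have hM : ∀ m : ℕ, 1 ≤ m → m ≤ M → L ≤ Real.log (x / m) := by
    intro m h1 h2
    have hm0 : (0 : ℝ) < m := by exact_mod_cast h1
    have h3 : (m : ℝ) ≤ x ^ (1 - c) := le_trans (by exact_mod_cast h2) hMle
    have h4 : Real.log m ≤ (1 - c) * Real.log x := by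
      rw [← Real.log_rpow hx0]; exact Real.log_le_log hm0 h3
    rw [Real.log_div hx0.ne' hm0.ne', hLdef]; linarith
  set Y := ⌈Real.sqrt x⌉₊ with hYdef
  have hsx : 2 ≤ Real.sqrt x := by
    rw [show (2 : ℝ) = Real.sqrt 4 by rw [show (4 : ℝ) = 2 ^ 2 by norm_num]; exact (Real.sqrt_sq (by norm_num)).symm]
    exact Real.sqrt_le_sqrt hx
  have hYge : Real.sqrt x ≤ Y := Nat.le_ceil _
  have hYle : (Y : ℝ) ≤ 2 * Real.sqrt x := by
    have := Nat.ceil_lt_add_one (Real.sqrt_nonneg x)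
    linarith
  have hY2 : 2 ≤ Y := by
    have : (2 : ℝ) ≤ Y := hsx.trans hYge
    exact_mod_cast this
  have hW1 : (1 : ℝ) ≤ Wp w := by exact_mod_cast Wp_pos w
  have hWl : 0 ≤ Real.log (Wp w) := Real.log_nonneg hW1
  have hd : 0 < 1 - 4 * δ := by linarith
  set f : ℕ → ℝ := fun m => 1 / ((m : ℝ) * (Real.log (x / m)) ^ 2) with hf
  set R : ℕ → ℝ := fun m => ∏ p ∈ (Finset.range (Y + 1)).filter Nat.Prime, rho w m p with hR
  have hR0 : ∀ m, 0 ≤ R m := fun m => Finset.prod_nonneg fun p hp => rho_nonneg w m p (Finset.mem_filter.1 hp).2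
  have hterm : ∀ m ∈ (Finset.Icc 1 M).filter (fun m => 2 ∣ m),
      (((Finset.Ioc 0 ⌊x / m⌋₊).filter (fun q => q.Prime ∧ (m * q + 1).Prime)).card : ℝ) ≤
      2 * Real.sqrt x + 8 / (1 - 4 * δ) ^ 2 * x * (R m * f m)
        + x * Real.exp (- (δ * Real.log x)) * (1 + Real.log x) ^ 2 * (m : ℝ)⁻¹ := by
    intro m hm
    rw [Finset.mem_filter, Finset.mem_Icc] at hm
    have hm1 := hm.1.1
    have hm0 : (0 : ℝ) < m := by exact_mod_cast hm1
    have hm1' : (1 : ℝ) ≤ m := by exact_mod_cast hm1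
    have hℓ := hM m hm1 hm.1.2
    set ℓ := Real.log (x / m) with hℓdef
    have hℓx : ℓ ≤ Real.log x := Real.log_le_log (by positivity) (div_le_self hx0.le hm1')
    have hℓ0 : 0 < ℓ := by linarith
    have hxℓ : Real.log x ≤ 2 * ℓ := by
      have : 8 / 9 * Real.log x ≤ L := by rw [hLdef]; gcongr
      linarith
    set z := Real.exp (1 / 2 * (ℓ - δ * Real.log x) - Real.log (Wp w)) with hz
    set y := Real.exp (1 / 2 * (ℓ - δ * Real.log x)) with hy
    have hlz : Real.log z = 1 / 2 * (ℓ - δ * Real.log x) - Real.log (Wp w) := Real.log_exp _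
    have hly : Real.log y = 1 / 2 * (ℓ - δ * Real.log x) := Real.log_exp _
    have hlzge : 1 / 2 * (1 - 4 * δ) * ℓ ≤ Real.log z := by
      rw [hlz]
      have := mul_le_mul_of_nonneg_left hxℓ hδ0.le
      linarith
    have hlzpos : 0 < Real.log z := lt_of_lt_of_le (by positivity) hlzge
    have hz1 : 1 < z := by
      rw [hz, Real.one_lt_exp_iff, ← hlz]; exact hlzpos
    have hzy : z * Wp w = y := by
      rw [hz, hy, Real.exp_sub, Real.exp_log (by linarith)]
      field_simp
    have hysx : y ≤ Real.sqrt x := by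
      rw [hy, Real.sqrt_eq_rpow, Real.rpow_def_of_pos hx0]
      apply Real.exp_le_exp.2
      have := mul_pos hδ0 hl0
      linarith
    have hzy' : z ≤ y := by rw [← hzy]; exact le_mul_of_one_le_right (Real.exp_pos _).le hW1
    have hpc := pair_count m ⌊x / m⌋₊ w Y hm.2 hm1 y z hz1 (Wp w) le_rfl hzy.le
      (hzy'.trans (hysx.trans hYge))
    refine hpc.trans ?_
    have hN : ((⌊x / m⌋₊ : ℕ) : ℝ) ≤ x / m := Nat.floor_le (by positivity)
    have hRm := hR0 m
    have t1 : ((⌊x / m⌋₊ : ℕ) : ℝ) * (2 * R m / (Real.log z) ^ 2) ≤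
        8 / (1 - 4 * δ) ^ 2 * x * (R m * f m) := by
      calc ((⌊x / m⌋₊ : ℕ) : ℝ) * (2 * R m / (Real.log z) ^ 2) ≤
          x / m * (2 * R m / (1 / 2 * (1 - 4 * δ) * ℓ) ^ 2) := by gcongr
        _ = _ := by rw [hf]; simp only; rw [← hℓdef]; field_simp; ring
    have t2 : (y * (1 + Real.log y)) ^ 2 ≤
        x * Real.exp (- (δ * Real.log x)) * (1 + Real.log x) ^ 2 * (m : ℝ)⁻¹ := by
      have e : y ^ 2 = x * Real.exp (- (δ * Real.log x)) * (m : ℝ)⁻¹ := by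
        rw [hy, ← Real.exp_nat_mul]
        have : ((2 : ℕ) : ℝ) * (1 / 2 * (ℓ - δ * Real.log x)) = ℓ + - (δ * Real.log x) := by push_cast; ring
        rw [this, Real.exp_add, hℓdef, Real.exp_log (by positivity)]
        ring
      rw [mul_pow, e]
      have h1 : 0 ≤ Real.log y := by rw [hly]; linarith
      have h2 : Real.log y ≤ Real.log x := by
        rw [hly]; have := mul_pos hδ0 hl0; linarith
      calc _ ≤ x * Real.exp (- (δ * Real.log x)) * (m : ℝ)⁻¹ * (1 + Real.log x) ^ 2 := by gcongr
        _ = _ := by ring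
    linarith
  refine (Finset.sum_le_sum hterm).trans ?_
  rw [Finset.sum_add_distrib, Finset.sum_add_distrib]
  have hK0 : 0 ≤ Kf c (Real.log x) := by
    unfold Kf
    rw [← hLdef]
    have : 0 ≤ 1 / L - 1 / Real.log x := by
      rw [sub_nonneg]; exact one_div_le_one_div_of_le (by linarith) hLx
    positivity
  have havg := avg_rho w Y M hw hY2 f (fun n => by rw [hf]; positivity) (Kf c (Real.log x)) hK0
    (fun D hD => sum_log_bound x L M hcx hx1 hLx hM D hD)
  have s1 : ∑ m ∈ (Finset.Icc 1 M).filter (fun m => 2 ∣ m), 2 * Real.sqrt x ≤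
      2 * Real.sqrt x * x ^ (1 - c) := by
    rw [Finset.sum_const, nsmul_eq_mul, mul_comm]
    have : ((((Finset.Icc 1 M).filter (fun m => 2 ∣ m)).card : ℕ) : ℝ) ≤ M := by
      have h := Finset.card_filter_le (Finset.Icc 1 M) (fun m => 2 ∣ m)
      rw [Nat.card_Icc, Nat.add_sub_cancel] at h
      exact_mod_cast h
    gcongr
    linarith
  have s3 : ∑ m ∈ (Finset.Icc 1 M).filter (fun m => 2 ∣ m), (m : ℝ)⁻¹ ≤ 1 + Real.log x := by
    calc _ ≤ ∑ m ∈ Finset.Icc 1 M, (m : ℝ)⁻¹ :=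
          Finset.sum_le_sum_of_subset_of_nonneg (Finset.filter_subset _ _) (fun n _ _ => by positivity)
      _ ≤ 1 + Real.log (x ^ (1 - c)) := by
          have := harmonic_floor_le_one_add_log (x ^ (1 - c)) (Real.one_le_rpow hx1.le (by linarith))
          rw [harmonic_eq_sum_Icc] at this
          push_cast at this
          exact this
      _ ≤ _ := by
          rw [Real.log_rpow hx0]
          nlinarith
  have t2 := mul_le_mul_of_nonneg_left havg (show 0 ≤ 8 / (1 - 4 * δ) ^ 2 * x by positivity)
  have t3 := mul_le_mul_of_nonneg_left s3
    (show 0 ≤ x * Real.exp (- (δ * Real.log x)) * (1 + Real.log x) ^ 2 by positivity)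
  have e3 : x * Real.exp (- (δ * Real.log x)) * (1 + Real.log x) ^ 2 * (1 + Real.log x) =
    x * Real.exp (- (δ * Real.log x)) * (1 + Real.log x) ^ 3 := by ring
  rw [e3] at t3
  refine add_le_add (add_le_add s1 ?_) ?_
  · rw [← Finset.mul_sum]; exact t2
  · rw [← Finset.mul_sum]; exact t3

open Filter Topology in
theorem T_asymp (c : ℝ) (hc1 : 8 / 9 ≤ c) (hc2 : c < 1) (ε : ℝ) (hε : 0 < ε) :
    ∀ᶠ x : ℝ in atTop, (T c x : ℝ) ≤ (8 * (1 / c - 1) + ε) * (x / Real.log x) := by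
  have hc0 : 0 < c := by linarith
  -- choose the parameters
  have hlim : Tendsto (fun n : ℕ => 8 / (1 - 4 * (1 / (n : ℝ))) ^ 2 * Real.exp (1 / n) * (1 / c - 1)) atTop
      (𝓝 (8 / (1 - 4 * 0) ^ 2 * Real.exp 0 * (1 / c - 1))) := by
    have h0 := tendsto_one_div_atTop_nhds_zero_nat (𝕜 := ℝ)
    apply Tendsto.mul_const
    apply Tendsto.mul
    · apply Tendsto.div tendsto_const_nhds _ (by norm_num)
      exact ((tendsto_const_nhds.sub (h0.const_mul 4)).pow 2)
    · exact (Real.continuous_exp.tendsto 0).comp h0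
  have hlt : 8 / (1 - 4 * 0) ^ 2 * Real.exp 0 * (1 / c - 1) < 8 * (1 / c - 1) + ε := by
    rw [Real.exp_zero]; norm_num; linarith
  obtain ⟨w, hw5, hwlt⟩ := ((eventually_ge_atTop 5).and (hlim.eventually (gt_mem_nhds hlt))).exists
  set δ : ℝ := 1 / (w : ℝ) with hδdef
  have hw5' : (5 : ℝ) ≤ w := by exact_mod_cast hw5
  have hδ0 : 0 < δ := by positivity
  have hδ : 4 * δ < 1 := by
    rw [hδdef, mul_one_div, div_lt_one (by linarith)]; linarith
  have hll : Tendsto (fun x : ℝ => Real.log x) atTop atTop := Real.tendsto_log_atTop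
  -- limit of normalized bound
  have hinv : Tendsto (fun l : ℝ => 1 / l) atTop (𝓝 0) := by
    simpa [one_div] using (tendsto_inv_atTop_zero (𝕜 := ℝ))
  have hK : Tendsto (fun l : ℝ => Kf c l * l) atTop (𝓝 (1 / c - 1)) := by
    have h1 : Tendsto (fun l : ℝ => 1 / c ^ 2 * (1 / l) + (1 + 1 / c * (1 / l)) * (1 / c - 1)) atTop
        (𝓝 (1 / c ^ 2 * 0 + (1 + 1 / c * 0) * (1 / c - 1))) :=
      (hinv.const_mul _).add ((tendsto_const_nhds.add (hinv.const_mul _)).mul_const _)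
    simp only [mul_zero, zero_add, add_zero, one_mul] at h1
    apply h1.congr'
    filter_upwards [eventually_gt_atTop 0] with l hl
    unfold Kf
    field_simp
  have hpolexp : ∀ b : ℝ, 0 < b → ∀ k : ℕ, Tendsto (fun l : ℝ => (1 + l) ^ k * Real.exp (- (b * l))) atTop (𝓝 0) := by
    intro b hb k
    have h1 := tendsto_rpow_mul_exp_neg_mul_atTop_nhds_zero (k : ℝ) b hb
    have h2 := h1.comp (tendsto_atTop_add_const_left atTop (1 : ℝ) tendsto_id)
    have h3 := h2.mul_const (Real.exp b)
    rw [zero_mul] at h3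
    apply h3.congr
    intro l
    simp only [Function.comp, id, Real.rpow_natCast]
    rw [mul_assoc, ← Real.exp_add]
    congr 2; ring
  have hB : Tendsto (fun l : ℝ => 2 * ((1 + l) ^ 1 * Real.exp (- ((c - 1 / 2) * l)))
      + 8 / (1 - 4 * δ) ^ 2 * Real.exp (1 / w) * (Kf c l * l)
      + (1 + l) ^ 4 * Real.exp (- (δ * l))) atTop
      (𝓝 (2 * 0 + 8 / (1 - 4 * δ) ^ 2 * Real.exp (1 / w) * (1 / c - 1) + 0)) :=
    (((hpolexp (c - 1 / 2) (by linarith) 1).const_mul 2).add (hK.const_mul _)).add (hpolexp δ hδ0 4)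
  have hB' := hB.comp hll
  have hlt2 : 2 * 0 + 8 / (1 - 4 * δ) ^ 2 * Real.exp (1 / w) * (1 / c - 1) + 0 < 8 * (1 / c - 1) + ε := by
    rw [mul_zero, zero_add, add_zero]; exact hwlt
  filter_upwards [hB'.eventually (gt_mem_nhds hlt2), eventually_ge_atTop 4,
    hll.eventually_ge_atTop (1 / c), hll.eventually_ge_atTop (2 * Real.log (Wp w) / δ),
    hll.eventually_gt_atTop 0] with x h1 h4 hlc hlW hl0
  have hx0 : 0 < x := by linarith
  have hT := T_bound_explicit c hc1 hc2 w (by omega) δ hδ0 hδ x h4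
    (by rw [div_le_iff₀ hc0] at hlc; linarith) (by rw [div_le_iff₀ hδ0] at hlW; linarith)
  refine hT.trans ?_
  simp only [Function.comp] at h1
  set l := Real.log x with hl
  have e1 : Real.sqrt x * x ^ (1 - c) = x * Real.exp (- ((c - 1 / 2) * l)) := by
    have hxe : x = Real.exp l := (Real.exp_log hx0).symm
    rw [Real.sqrt_eq_rpow, Real.rpow_def_of_pos hx0, Real.rpow_def_of_pos hx0, ← hl, ← Real.exp_add]
    conv_rhs => rw [hxe]
    rw [← Real.exp_add]; congr 1; ring
  have e2 : (8 * (1 / c - 1) + ε) * (x / l) = x / l * (8 * (1 / c - 1) + ε) := by ring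
  rw [e2, mul_assoc 2, e1]
  refine le_trans ?_ (mul_le_mul_of_nonneg_left h1.le (by positivity))
  have hE := Real.exp_pos (- ((c - 1 / 2) * l))
  have hE2 := Real.exp_pos (- (δ * l))
  have r1 : 2 * (x * Real.exp (- ((c - 1 / 2) * l))) ≤
      x / l * (2 * ((1 + l) ^ 1 * Real.exp (- ((c - 1 / 2) * l)))) := by
    have : x / l * (2 * ((1 + l) ^ 1 * Real.exp (- ((c - 1 / 2) * l)))) =
      2 * (x * Real.exp (- ((c - 1 / 2) * l))) * ((1 + l) / l) := by field_simp
    rw [this]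
    apply le_mul_of_one_le_right (by positivity)
    rw [le_div_iff₀ hl0]; linarith
  have r2 : 8 / (1 - 4 * δ) ^ 2 * x * (Kf c l * Real.exp (1 / w)) =
      x / l * (8 / (1 - 4 * δ) ^ 2 * Real.exp (1 / w) * (Kf c l * l)) := by
    field_simp
  have r3 : x * Real.exp (- (δ * l)) * (1 + l) ^ 3 ≤ x / l * ((1 + l) ^ 4 * Real.exp (- (δ * l))) := by
    have : x / l * ((1 + l) ^ 4 * Real.exp (- (δ * l))) =
      x * Real.exp (- (δ * l)) * (1 + l) ^ 3 * ((1 + l) / l) := by field_simp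
    rw [this]
    apply le_mul_of_one_le_right (by positivity)
    rw [le_div_iff₀ hl0]; linarith
  rw [r2, mul_add, mul_add]
  linarith

end TBound

/-! Part E: lower bound in the prime number theorem -/

noncomputable def pnB (u : ℝ) : ℝ := Chebyshev.psi (Real.exp u) * Real.exp (-u)

noncomputable def pnC : ℝ := Real.log 4 + 4

lemma pnC_pos : 4 < pnC := by
  unfold pnC
  have : 0 < Real.log 4 := Real.log_pos (by norm_num)
  linarith

lemma pnB_nonneg (u : ℝ) : 0 ≤ pnB u :=
  mul_nonneg (Chebyshev.psi_nonneg _) (Real.exp_pos _).le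

lemma pnB_le (u : ℝ) : pnB u ≤ pnC := by
  unfold pnB pnC
  have h := Chebyshev.psi_le_const_mul_self (Real.exp_pos u).le
  calc _ ≤ ((Real.log 4 + 4) * Real.exp u) * Real.exp (-u) :=
        mul_le_mul_of_nonneg_right h (Real.exp_pos _).le
    _ = _ := by rw [mul_assoc, ← Real.exp_add]; simp

lemma pnB_meas : Measurable pnB := by
  unfold pnB
  exact ((Chebyshev.psi_mono.measurable).comp Real.measurable_exp).mul (by fun_prop)

lemma pnB_abs (u : ℝ) : |pnB u - 1| ≤ pnC := by
  have h1 := pnB_nonneg u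
  have h2 := pnB_le u
  have h3 := pnC_pos
  rw [abs_le]; constructor <;> linarith

lemma pnB_slow {u v : ℝ} (h : u ≤ v) : pnB u ≤ Real.exp (v - u) * pnB v := by
  unfold pnB
  have h1 : Chebyshev.psi (Real.exp u) ≤ Chebyshev.psi (Real.exp v) :=
    Chebyshev.psi_mono (Real.exp_le_exp.mpr h)
  calc _ ≤ Chebyshev.psi (Real.exp v) * Real.exp (-u) :=
        mul_le_mul_of_nonneg_right h1 (Real.exp_pos _).le
    _ = _ := by
      rw [mul_left_comm, ← Real.exp_add]; congr 2; ring

/-- the analytic side -/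
noncomputable def pnG (s : ℂ) : ℂ :=
  (ArithmeticFunction.vonMangoldt.LFunctionResidueClassAux (1 : ZMod 1) s - 1) / s

lemma pnG_cont : ContinuousOn pnG {s : ℂ | 1 ≤ s.re} := by
  unfold pnG
  refine ContinuousOn.div ?_ continuousOn_id ?_
  · exact (ArithmeticFunction.vonMangoldt.continuousOn_LFunctionResidueClassAux (1 : ZMod 1)).sub
      continuousOn_const
  · intro s hs h0
    have hs' : (1:ℝ) ≤ s.re := hs
    rw [h0] at hs'
    norm_num at hs'

lemma pn_LSeries {s : ℂ} (hs : 1 < s.re) :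
    LSeries (fun n => ((ArithmeticFunction.vonMangoldt n : ℝ) : ℂ)) s =
      s * ∫ u in Set.Ioi (0:ℝ), (pnB u : ℂ) * Complex.exp (-(s - 1) * u) := by
  rw [LSeries_eq_mul_integral_of_nonneg (fun n => ArithmeticFunction.vonMangoldt n)
    (r := 1) zero_le_one hs ?_ (fun n => ArithmeticFunction.vonMangoldt_nonneg)]
  · congr 1
    have him : Set.Ioi (1:ℝ) = Real.exp '' (Set.Ioi 0) := by
      ext y; constructor
      · intro hy
        have hy' : (1:ℝ) < y := hy
        exact ⟨Real.log y, Real.log_pos hy', Real.exp_log (by linarith)⟩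
      · rintro ⟨u, hu, rfl⟩
        exact Real.one_lt_exp_iff.mpr hu
    rw [him, MeasureTheory.integral_image_eq_integral_abs_deriv_smul measurableSet_Ioi
      (fun x _ => (Real.hasDerivAt_exp x).hasDerivWithinAt) (Real.exp_injective.injOn)]
    refine MeasureTheory.integral_congr_ae (Filter.Eventually.of_forall fun u => ?_)
    simp only
    have hpsi : (∑ k ∈ Icc 1 ⌊Real.exp u⌋₊, ((ArithmeticFunction.vonMangoldt k : ℝ) : ℂ))
        = ((Chebyshev.psi (Real.exp u) : ℝ) : ℂ) := by
      unfold Chebyshev.psi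
      push_cast
      rfl
    rw [hpsi, abs_of_pos (Real.exp_pos u), Complex.real_smul]
    unfold pnB
    have h2 : ((Real.exp u : ℝ) : ℂ) ^ (-(s + 1)) = Complex.exp (-(s+1) * u) := by
      rw [Complex.cpow_def_of_ne_zero (by exact_mod_cast (Real.exp_pos u).ne'), ← Complex.ofReal_log
        (Real.exp_pos u).le, Real.log_exp, mul_comm]
    rw [h2]
    push_cast
    rw [mul_left_comm, ← Complex.exp_add, mul_assoc, ← Complex.exp_add]
    congr 2; ring
  · refine Asymptotics.IsBigO.of_bound pnC (Filter.Eventually.of_forall fun n => ?_)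
    have h := Chebyshev.psi_le_const_mul_self (Nat.cast_nonneg (α := ℝ) n)
    have h0 := Chebyshev.psi_nonneg (n : ℝ)
    unfold Chebyshev.psi at h h0
    rw [Nat.floor_natCast] at h h0
    rw [Real.rpow_one, Real.norm_of_nonneg (Nat.cast_nonneg _)]
    change ‖∑ n ∈ Ioc 0 n, ArithmeticFunction.vonMangoldt n‖ ≤ _
    rw [Real.norm_of_nonneg h0]
    exact h

lemma pn_int1 {s : ℂ} (hs : 1 < s.re) : MeasureTheory.IntegrableOn
    (fun u : ℝ => ((pnB u - 1 : ℝ) : ℂ) * Complex.exp (-(s - 1) * u)) (Set.Ioi (0:ℝ)) := by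
  have h1 : MeasureTheory.IntegrableOn (fun u : ℝ => Complex.exp (-(s - 1) * u)) (Set.Ioi (0:ℝ)) :=
    integrableOn_exp_mul_complex_Ioi (by simp; linarith) 0
  refine MeasureTheory.Integrable.bdd_mul (c := pnC) h1 ?_ ?_
  · exact (Complex.measurable_ofReal.comp (pnB_meas.sub measurable_const)).aestronglyMeasurable
  · refine Filter.Eventually.of_forall fun u => ?_
    rw [Complex.norm_real]; exact pnB_abs u

lemma pnG_eq {s : ℂ} (hs : 1 < s.re) :
    pnG s = ∫ u in Set.Ioi (0:ℝ), ((pnB u - 1 : ℝ) : ℂ) * Complex.exp (-(s - 1) * u) := by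
  have h1 : MeasureTheory.IntegrableOn (fun u : ℝ => Complex.exp (-(s - 1) * u)) (Set.Ioi (0:ℝ)) :=
    integrableOn_exp_mul_complex_Ioi (by simp; linarith) 0
  have h2 : MeasureTheory.IntegrableOn
      (fun u : ℝ => (pnB u : ℂ) * Complex.exp (-(s - 1) * u)) (Set.Ioi (0:ℝ)) := by
    have := (pn_int1 hs).add h1
    refine this.congr (Filter.Eventually.of_forall fun u => ?_)
    simp only [Pi.add_apply]; push_cast; ring
  have hL := pn_LSeries hs
  have hG := ArithmeticFunction.vonMangoldt.eqOn_LFunctionResidueClassAux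
    (a := (1 : ZMod 1)) isUnit_one hs
  have hres : (fun n => ((ArithmeticFunction.vonMangoldt.residueClass (1 : ZMod 1) n : ℝ) : ℂ)) =
      fun n => ((ArithmeticFunction.vonMangoldt n : ℝ) : ℂ) := by
    funext n
    simp only [ArithmeticFunction.vonMangoldt.residueClass]
    rw [Set.indicator_of_mem]
    exact Subsingleton.elim _ _
  simp only [hres] at hG
  have hs0 : s ≠ 0 := by intro h; rw [h] at hs; norm_num at hs
  have hs1 : s - 1 ≠ 0 := by
    intro h; rw [sub_eq_zero.mp h] at hs; norm_num at hs
  have e1 : (∫ u in Set.Ioi (0:ℝ), ((pnB u - 1 : ℝ) : ℂ) * Complex.exp (-(s - 1) * u)) =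
      (∫ u in Set.Ioi (0:ℝ), (pnB u : ℂ) * Complex.exp (-(s - 1) * u)) -
        ∫ u in Set.Ioi (0:ℝ), Complex.exp (-(s - 1) * u) := by
    rw [← MeasureTheory.integral_sub h2 h1]
    refine MeasureTheory.integral_congr_ae (Filter.Eventually.of_forall fun u => ?_)
    simp only; push_cast; ring
  rw [e1, integral_exp_mul_complex_Ioi (by simp; linarith) 0]
  unfold pnG
  rw [hG, hL]
  simp only [Nat.totient_one, Nat.cast_one, inv_one, Complex.ofReal_zero, mul_zero, Complex.exp_zero]
  generalize (∫ u in Set.Ioi (0:ℝ), (pnB u : ℂ) * Complex.exp (-(s - 1) * u)) = I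
  have : -(s-1) ≠ 0 := neg_ne_zero.mpr hs1
  field_simp
  ring


noncomputable def pnK (l u : ℝ) : ℝ := (1 - Real.cos (l * u)) / (l * u ^ 2)

lemma pnK_nonneg {l : ℝ} (hl : 0 < l) (u : ℝ) : 0 ≤ pnK l u := by
  unfold pnK
  have := Real.cos_le_one (l * u)
  apply div_nonneg (by linarith) (by positivity)

lemma pnK_le {l : ℝ} (hl : 0 < l) (u : ℝ) : pnK l u ≤ (l / 2 + 2 / l) * (1 + u ^ 2)⁻¹ := by
  unfold pnK
  have h1 := Real.one_sub_sq_div_two_le_cos (x := l * u)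
  have h2 := Real.neg_one_le_cos (l * u)
  by_cases hu : u = 0
  · subst hu; simp; positivity
  · have hu2 : 0 < u ^ 2 := by positivity
    rw [← div_eq_mul_inv, div_le_div_iff₀ (by positivity) (by positivity)]
    have e : (l / 2 + 2 / l) * (l * u ^ 2) = (l*u)^2/2 + 2 * u^2 := by
      field_simp
    rw [e]
    nlinarith

lemma pnK_tail {l η : ℝ} (hl : 0 < l) (hη : 0 < η) {u : ℝ} (hu : η ≤ |u|) :
    pnK l u ≤ (2 / l * (1 + 1 / η ^ 2)) * (1 + u ^ 2)⁻¹ := by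
  unfold pnK
  have h2 := Real.neg_one_le_cos (l * u)
  have hu2 : η ^ 2 ≤ u ^ 2 := by rw [← sq_abs u]; gcongr
  have hη2 : 0 < η ^ 2 := by positivity
  have hu3 : 0 < u ^ 2 := by linarith
  rw [← div_eq_mul_inv, div_le_div_iff₀ (by positivity) (by positivity)]
  have e : 2 / l * (1 + 1 / η ^ 2) * (l * u ^ 2) = 2 * (u ^ 2 + u ^ 2 / η ^ 2) := by
    field_simp
  rw [e]
  have : 1 ≤ u ^ 2 / η ^ 2 := by rwa [one_le_div hη2]
  nlinarith

lemma pnK_meas (l : ℝ) : Measurable (pnK l) := by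
  unfold pnK
  fun_prop

lemma pnK_int {l : ℝ} (hl : 0 < l) : MeasureTheory.Integrable (pnK l) := by
  refine MeasureTheory.Integrable.mono' (integrable_inv_one_add_sq.const_mul (l / 2 + 2 / l))
    (pnK_meas l).aestronglyMeasurable (Filter.Eventually.of_forall fun u => ?_)
  rw [Real.norm_of_nonneg (pnK_nonneg hl u)]
  exact pnK_le hl u

lemma pnK_total {l : ℝ} (hl : 0 < l) : ∫ u, pnK l u = ∫ u, pnK 1 u := by
  have h : pnK l = fun u => l * pnK 1 (l * u) := by
    funext u; unfold pnK
    by_cases hu : u = 0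
    · subst hu; simp
    · field_simp
  rw [h, MeasureTheory.integral_const_mul, MeasureTheory.Measure.integral_comp_mul_left,
    smul_eq_mul, abs_of_pos (inv_pos.mpr hl), ← mul_assoc, mul_inv_cancel₀ hl.ne', one_mul]

lemma pnK_total_pos : 0 < ∫ u, pnK 1 u := by
  rw [MeasureTheory.integral_pos_iff_support_of_nonneg (fun u => pnK_nonneg one_pos u)
    (pnK_int one_pos)]
  have hsub : Set.Ioo (0:ℝ) Real.pi ⊆ Function.support (pnK 1) := by
    intro u hu
    have : Real.cos u < Real.cos 0 := Real.cos_lt_cos_of_nonneg_of_le_pi le_rfl hu.2.le hu.1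
    rw [Real.cos_zero] at this
    have hu0 : 0 < u := hu.1
    rw [Function.mem_support]
    unfold pnK
    rw [one_mul, one_mul]
    exact (div_pos (by linarith) (by positivity)).ne'
  refine lt_of_lt_of_le ?_ (MeasureTheory.measure_mono hsub)
  simp [Real.pi_pos]

/-- Fourier representation of the kernel. -/
lemma pnK_fourier {l : ℝ} (hl : 0 < l) {u : ℝ} (hu : u ≠ 0) :
    ∫ t in (0:ℝ)..l, (1 - t / l) * Real.cos (t * u) = pnK l u := by
  have hd : ∀ t ∈ Set.uIcc (0:ℝ) l, HasDerivAt
      (fun t => (1 - t / l) * Real.sin (t * u) / u - Real.cos (t * u) / (l * u ^ 2))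
      ((1 - t / l) * Real.cos (t * u)) t := by
    intro t _
    have h1 : HasDerivAt (fun t : ℝ => t * u) u t := by simpa using (hasDerivAt_id t).mul_const u
    have h2 : HasDerivAt (fun t : ℝ => 1 - t / l) (-(1 / l)) t := by
      simpa using ((hasDerivAt_id t).div_const l).const_sub 1
    have := ((h2.mul (h1.sin)).div_const u).sub ((h1.cos).div_const (l * u ^ 2))
    refine this.congr_deriv ?_
    field_simp
    ring
  rw [intervalIntegral.integral_eq_sub_of_hasDerivAt hd
    (Continuous.intervalIntegrable (by fun_prop) _ _)]
  unfold pnK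
  rw [div_self hl.ne']
  simp
  field_simp
  ring


noncomputable def pnf (l δ v t u : ℝ) : ℂ :=
  (((1 - t / l) * ((pnB u - 1) * Real.exp (-δ * u)) : ℝ) : ℂ) *
    Complex.exp (((t * (v - u) : ℝ) : ℂ) * Complex.I)

lemma pnf_re (l δ v t u : ℝ) : (pnf l δ v t u).re =
    ((pnB u - 1) * Real.exp (-δ * u)) * ((1 - t / l) * Real.cos (t * (u - v))) := by
  unfold pnf
  rw [Complex.re_ofReal_mul, Complex.exp_ofReal_mul_I_re, ← Real.cos_neg (t * (u - v))]
  rw [show -(t * (u - v)) = t * (v - u) by ring]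
  ring

lemma pnf_meas (l δ v : ℝ) : Measurable (Function.uncurry (pnf l δ v)) := by
  unfold pnf Function.uncurry
  have := pnB_meas
  have h1 : Measurable (fun a : ℝ × ℝ => pnB a.2) := pnB_meas.comp measurable_snd
  fun_prop

lemma pnf_int {l δ : ℝ} (hl : 0 < l) (hδ : 0 < δ) (v : ℝ) : MeasureTheory.Integrable
    (Function.uncurry (pnf l δ v))
    ((MeasureTheory.volume.restrict (Set.Ioc 0 l)).prod
      (MeasureTheory.volume.restrict (Set.Ioi (0:ℝ)))) := by
  have hg1 : MeasureTheory.Integrable (fun _ : ℝ => (1:ℝ))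
      (MeasureTheory.volume.restrict (Set.Ioc 0 l)) := MeasureTheory.integrable_const _
  have hg2 : MeasureTheory.Integrable (fun u : ℝ => pnC * Real.exp (-δ * u))
      (MeasureTheory.volume.restrict (Set.Ioi (0:ℝ))) :=
    (integrableOn_exp_mul_Ioi (neg_lt_zero.mpr hδ) 0).const_mul _
  refine MeasureTheory.Integrable.mono' (hg1.mul_prod hg2)
    (pnf_meas l δ v).aestronglyMeasurable ?_
  rw [MeasureTheory.Measure.prod_restrict]
  refine MeasureTheory.ae_restrict_of_forall_mem (measurableSet_Ioc.prod measurableSet_Ioi) ?_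
  rintro ⟨t, u⟩ ⟨ht, hu⟩
  simp only [Function.uncurry]
  unfold pnf
  rw [norm_mul, Complex.norm_exp_ofReal_mul_I, mul_one, Complex.norm_real, Real.norm_eq_abs,
    abs_mul, abs_mul, abs_of_pos (Real.exp_pos _)]
  have h1 : |1 - t / l| ≤ 1 := by
    have h0 : 0 < t := ht.1
    have h1 : t ≤ l := ht.2
    have h2 : t / l ≤ 1 := by rwa [div_le_one hl]
    have h3 : 0 ≤ t / l := by positivity
    rw [abs_le]; constructor <;> linarith
  have h2 := pnB_abs u
  have := Real.exp_pos (-δ * u)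
  gcongr

lemma pn_fubini {l δ : ℝ} (hl : 0 < l) (hδ : 0 < δ) (v : ℝ) :
    ∫ u in Set.Ioi (0:ℝ), ((pnB u - 1) * Real.exp (-δ * u)) * pnK l (u - v) =
    (∫ t in Set.Ioc 0 l, ((1 - t / l : ℝ) : ℂ) * Complex.exp (((t * v : ℝ) : ℂ) * Complex.I) *
      pnG (1 + (δ : ℂ) + (t : ℂ) * Complex.I)).re := by
  have e1 : (∫ t in Set.Ioc 0 l, ((1 - t / l : ℝ) : ℂ) *
      Complex.exp (((t * v : ℝ) : ℂ) * Complex.I) * pnG (1 + (δ : ℂ) + (t : ℂ) * Complex.I)) =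
      ∫ t in Set.Ioc 0 l, ∫ u in Set.Ioi (0:ℝ), pnf l δ v t u := by
    refine MeasureTheory.integral_congr_ae (Filter.Eventually.of_forall fun t => ?_)
    simp only
    rw [pnG_eq (by simp; exact hδ), ← MeasureTheory.integral_const_mul]
    refine MeasureTheory.integral_congr_ae (Filter.Eventually.of_forall fun u => ?_)
    simp only
    unfold pnf
    push_cast
    have : Complex.exp (-(1 + (δ:ℂ) + t * Complex.I - 1) * u) =
        Complex.exp (-δ * u) * Complex.exp (- (t * u * Complex.I)) := by
      rw [← Complex.exp_add]; congr 1; ring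
    rw [this]
    have h2 : Complex.exp ((t:ℂ) * (v - u) * Complex.I) =
      Complex.exp (t * v * Complex.I) * Complex.exp (- (t * u * Complex.I)) := by
      rw [← Complex.exp_add]; congr 1; ring
    rw [h2]
    ring
  have hi := pnf_int hl hδ v
  rw [e1, MeasureTheory.integral_integral_swap hi]
  have hre := integral_re (𝕜 := ℂ) hi.integral_prod_right
  simp only [RCLike.re_eq_complex_re] at hre
  simp only [Function.uncurry] at hre
  rw [← hre]
  refine MeasureTheory.integral_congr_ae ?_
  have hae := hi.prod_left_ae
  have hne : ∀ᵐ u : ℝ ∂(MeasureTheory.volume.restrict (Set.Ioi (0:ℝ))), u ≠ v :=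
    MeasureTheory.ae_restrict_of_ae (MeasureTheory.Measure.ae_ne _ v)
  filter_upwards [hae, hne] with u hu huv
  have hre2 := integral_re (𝕜 := ℂ) hu
  simp only [RCLike.re_eq_complex_re, Function.uncurry] at hre2
  rw [← hre2]
  simp only [pnf_re]
  rw [MeasureTheory.integral_const_mul, ← intervalIntegral.integral_of_le hl.le,
    pnK_fourier hl (sub_ne_zero.mpr huv)]


lemma pnG_cont2 : ContinuousOn (fun p : ℝ × ℝ => pnG (1 + (p.1 : ℂ) + (p.2 : ℂ) * Complex.I))
    {p | 0 ≤ p.1} := by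
  refine pnG_cont.comp (Continuous.continuousOn (by fun_prop)) ?_
  intro p hp
  have hp' : 0 ≤ p.1 := hp
  show (1:ℝ) ≤ _
  simp
  exact hp'

lemma pnG_bound (l : ℝ) : ∃ M : ℝ, ∀ δ ∈ Set.Icc (0:ℝ) 1, ∀ t ∈ Set.Icc (0:ℝ) l,
    ‖pnG (1 + (δ : ℂ) + (t : ℂ) * Complex.I)‖ ≤ M := by
  have hc : IsCompact (Set.Icc (0:ℝ) 1 ×ˢ Set.Icc (0:ℝ) l) := isCompact_Icc.prod isCompact_Icc
  obtain ⟨M, hM⟩ := hc.exists_bound_of_continuousOn (pnG_cont2.mono (fun p hp => hp.1.1))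
  exact ⟨M, fun δ hδ t ht => hM (δ, t) ⟨hδ, ht⟩⟩

open Filter Topology in
lemma pn_limit {l : ℝ} (hl : 0 < l) (v : ℝ) :
    ∫ u in Set.Ioi (0:ℝ), (pnB u - 1) * pnK l (u - v) =
    (∫ t in Set.Ioc 0 l, ((1 - t / l : ℝ) : ℂ) * Complex.exp (((t * v : ℝ) : ℂ) * Complex.I) *
      pnG (1 + (0 : ℝ) + (t : ℂ) * Complex.I)).re := by
  let d : ℕ → ℝ := fun n => 1 / ((n : ℝ) + 1)
  have hd0 : ∀ n, 0 < d n := fun n => by positivity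
  have hd1 : ∀ n, d n ≤ 1 := fun n => by
    simp only [d]
    rw [div_le_one (by positivity)]
    have : (0:ℝ) ≤ n := Nat.cast_nonneg n
    linarith
  have hd : Tendsto d atTop (𝓝 0) := tendsto_one_div_add_atTop_nhds_zero_nat
  clear_value d
  have hL : Tendsto (fun n => ∫ u in Set.Ioi (0:ℝ),
      ((pnB u - 1) * Real.exp (-(d n) * u)) * pnK l (u - v)) atTop
      (𝓝 (∫ u in Set.Ioi (0:ℝ), (pnB u - 1) * pnK l (u - v))) := by
    refine MeasureTheory.tendsto_integral_of_dominated_convergence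
      (fun u => pnC * pnK l (u - v)) ?_ ?_ ?_ ?_
    · intro n
      have := pnB_meas
      have := pnK_meas l
      exact Measurable.aestronglyMeasurable (by fun_prop)
    · exact (((pnK_int hl).comp_sub_right v).const_mul _).integrableOn
    · intro n
      refine MeasureTheory.ae_restrict_of_forall_mem measurableSet_Ioi ?_
      intro u hu
      have hu0 : 0 < u := hu
      rw [norm_mul, norm_mul, Real.norm_of_nonneg (pnK_nonneg hl _),
        Real.norm_of_nonneg (Real.exp_pos _).le, Real.norm_eq_abs]
      have h1 := pnB_abs u
      have h2 : Real.exp (-(d n) * u) ≤ 1 := by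
        rw [Real.exp_le_one_iff]
        have := mul_pos (hd0 n) hu0
        linarith
      have h3 := pnK_nonneg hl (u - v)
      have h4 := (Real.exp_pos (-(d n) * u)).le
      have h5 := pnC_pos
      refine mul_le_mul_of_nonneg_right ?_ h3
      calc |pnB u - 1| * Real.exp (-(d n) * u) ≤ pnC * 1 :=
            mul_le_mul h1 h2 h4 (by linarith)
        _ = pnC := mul_one _
    · refine Eventually.of_forall fun u => ?_
      refine Tendsto.mul_const _ ?_
      have : Tendsto (fun n => (pnB u - 1) * Real.exp (-(d n) * u)) atTop
          (𝓝 ((pnB u - 1) * Real.exp (-0 * u))) := by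
        refine Tendsto.const_mul _ ?_
        exact (Real.continuous_exp.tendsto _).comp ((hd.neg).mul_const u)
      simpa using this
  obtain ⟨M, hM⟩ := pnG_bound l
  have hR : Tendsto (fun n => ∫ t in Set.Ioc 0 l, ((1 - t / l : ℝ) : ℂ) *
      Complex.exp (((t * v : ℝ) : ℂ) * Complex.I) * pnG (1 + (d n : ℝ) + (t : ℂ) * Complex.I)) atTop
      (𝓝 (∫ t in Set.Ioc 0 l, ((1 - t / l : ℝ) : ℂ) *
      Complex.exp (((t * v : ℝ) : ℂ) * Complex.I) * pnG (1 + (0 : ℝ) + (t : ℂ) * Complex.I))) := by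
    refine MeasureTheory.tendsto_integral_of_dominated_convergence (fun _ => M) ?_ ?_ ?_ ?_
    · intro n
      refine ContinuousOn.aestronglyMeasurable ?_ measurableSet_Ioc
      refine ContinuousOn.mul (Continuous.continuousOn (by fun_prop)) ?_
      exact pnG_cont2.comp (f := fun t : ℝ => (d n, t)) (Continuous.continuousOn (by fun_prop))
        (fun t _ => (hd0 n).le)
    · exact MeasureTheory.integrable_const _
    · intro n
      refine MeasureTheory.ae_restrict_of_forall_mem measurableSet_Ioc ?_
      intro t ht
      rw [norm_mul, norm_mul, Complex.norm_exp_ofReal_mul_I, mul_one, Complex.norm_real,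
        Real.norm_eq_abs]
      have h1 : |1 - t / l| ≤ 1 := by
        have h0 : 0 < t := ht.1
        have h1 : t ≤ l := ht.2
        have h2 : t / l ≤ 1 := by rwa [div_le_one hl]
        have h3 : 0 ≤ t / l := by positivity
        rw [abs_le]; constructor <;> linarith
      have h2 := hM (d n) ⟨(hd0 n).le, hd1 n⟩ t ⟨ht.1.le, ht.2⟩
      calc _ ≤ 1 * M := mul_le_mul h1 h2 (norm_nonneg _) zero_le_one
        _ = M := one_mul _
    · refine Eventually.of_forall fun t => ?_
      have hcw : Tendsto (fun p : ℝ × ℝ => pnG (1 + (p.1 : ℂ) + (p.2 : ℂ) * Complex.I))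
          (𝓝[{p | 0 ≤ p.1}] ((0:ℝ), t)) (𝓝 (pnG (1 + ((0:ℝ) : ℂ) + (t : ℂ) * Complex.I))) :=
        pnG_cont2 ((0:ℝ), t) (le_refl (0:ℝ))
      have : Tendsto (fun n => ((d n, t) : ℝ × ℝ)) atTop (𝓝[{p | 0 ≤ p.1}] ((0:ℝ), t)) := by
        rw [tendsto_nhdsWithin_iff]
        refine ⟨hd.prodMk_nhds tendsto_const_nhds, Eventually.of_forall fun n => (hd0 n).le⟩
      have h3 := hcw.comp this
      simp only [Function.comp_def] at h3
      exact h3.const_mul _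
  have hR2 := (Complex.continuous_re.tendsto _).comp hR
  refine tendsto_nhds_unique hL (hR2.congr fun n => ?_)
  simp only [Function.comp_apply]
  exact (pn_fubini hl (hd0 n) v).symm

open Filter Topology in
lemma pn_RL {l : ℝ} (hl : 0 < l) :
    Tendsto (fun v => ∫ u in Set.Ioi (0:ℝ), (pnB u - 1) * pnK l (u - v)) atTop (𝓝 0) := by
  have h := Real.tendsto_integral_exp_smul_cocompact
    (Set.indicator (Set.Ioc 0 l) (fun t : ℝ => ((1 - t / l : ℝ) : ℂ) *
      pnG (1 + (0 : ℝ) + (t : ℂ) * Complex.I)))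
  have hw : Tendsto (fun v : ℝ => -(v / (2 * Real.pi))) atTop (cocompact ℝ) := by
    rw [cocompact_eq_atBot_atTop]
    refine Tendsto.mono_right ?_ le_sup_left
    exact tendsto_neg_atTop_atBot.comp (tendsto_id.atTop_div_const (by positivity))
  have h2 := (Complex.continuous_re.tendsto _).comp (h.comp hw)
  rw [Complex.zero_re] at h2
  refine h2.congr fun v => ?_
  rw [pn_limit hl v]
  simp only [Function.comp]
  congr 1
  rw [← MeasureTheory.integral_indicator measurableSet_Ioc]
  refine MeasureTheory.integral_congr_ae (Filter.Eventually.of_forall fun t => ?_)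
  simp only
  by_cases ht : t ∈ Set.Ioc 0 l
  · rw [Set.indicator_of_mem ht, Set.indicator_of_mem ht, Circle.smul_def, Real.fourierChar_apply,
      smul_eq_mul]
    have : 2 * Real.pi * (-(t * -(v / (2 * Real.pi)))) = t * v := by
      have := Real.pi_pos
      field_simp
    rw [this]
    ring
  · rw [Set.indicator_of_notMem ht, Set.indicator_of_notMem ht, smul_zero]


open Filter Topology in
lemma pnK_half {l : ℝ} (hl : 0 < l) :
    Tendsto (fun v => ∫ u in Set.Ioi (0:ℝ), pnK l (u - v)) atTop (𝓝 (∫ u, pnK 1 u)) := by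
  rw [← pnK_total hl]
  have h := (MeasureTheory.aecover_Ioi (μ := MeasureTheory.volume)
    (tendsto_neg_atTop_atBot (G := ℝ))).integral_tendsto_of_countably_generated (pnK_int hl)
  refine h.congr fun v => ?_
  rw [← MeasureTheory.integral_indicator measurableSet_Ioi,
    ← MeasureTheory.integral_indicator measurableSet_Ioi,
    ← MeasureTheory.integral_sub_right_eq_self _ v]
  refine MeasureTheory.integral_congr_ae (Filter.Eventually.of_forall fun t => ?_)
  simp only [Set.indicator, Set.mem_Ioi, neg_lt_sub_iff_lt_add, lt_add_iff_pos_right]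

lemma pn_upper {l η : ℝ} (hl : 0 < l) (hη : 0 < η) (v : ℝ) :
    ∫ u in Set.Ioi (0:ℝ), pnB u * pnK l (u - (v - η)) ≤
      Real.exp (2 * η) * pnB v * (∫ u, pnK 1 u) +
        pnC * (2 / l * (1 + 1 / η ^ 2)) * Real.pi := by
  set D := pnC * (2 / l * (1 + 1 / η ^ 2)) with hD
  have hC := pnC_pos
  have hD0 : 0 ≤ D := by rw [hD]; positivity
  have hiK := (pnK_int hl).comp_sub_right (v - η)
  have hi1 : MeasureTheory.Integrable (fun u : ℝ => (1 + (u - (v - η)) ^ 2)⁻¹) :=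
    integrable_inv_one_add_sq.comp_sub_right (v - η)
  have hi := (hiK.const_mul (Real.exp (2 * η) * pnB v)).add (hi1.const_mul D)
  have hpt : ∀ u : ℝ, pnB u * pnK l (u - (v - η)) ≤
      Real.exp (2 * η) * pnB v * pnK l (u - (v - η)) + D * (1 + (u - (v - η)) ^ 2)⁻¹ := by
    intro u
    have hK := pnK_nonneg hl (u - (v - η))
    have hb := pnB_nonneg v
    by_cases hu : |u - (v - η)| ≤ η
    · rw [abs_le] at hu
      have h1 := pnB_slow (u := u) (v := v) (by linarith [hu.2])
      have h2 : Real.exp (v - u) ≤ Real.exp (2 * η) := Real.exp_le_exp.mpr (by linarith [hu.1])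
      have h3 : pnB u ≤ Real.exp (2 * η) * pnB v :=
        h1.trans (mul_le_mul_of_nonneg_right h2 hb)
      have h4 := mul_le_mul_of_nonneg_right h3 hK
      have h5 : 0 ≤ D * (1 + (u - (v - η)) ^ 2)⁻¹ := by positivity
      linarith
    · have h1 := pnK_tail hl hη (not_le.mp hu).le
      have h2 : pnB u * pnK l (u - (v - η)) ≤ D * (1 + (u - (v - η)) ^ 2)⁻¹ := by
        rw [hD, mul_assoc]
        exact mul_le_mul (pnB_le u) h1 hK (by linarith)
      have h3 : 0 ≤ Real.exp (2 * η) * pnB v * pnK l (u - (v - η)) := by positivity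
      linarith
  have hlhs : MeasureTheory.Integrable (fun u => pnB u * pnK l (u - (v - η))) := by
    refine MeasureTheory.Integrable.bdd_mul (c := pnC) hiK pnB_meas.aestronglyMeasurable ?_
    refine Filter.Eventually.of_forall fun u => ?_
    rw [Real.norm_of_nonneg (pnB_nonneg u)]; exact pnB_le u
  calc _ ≤ ∫ u, pnB u * pnK l (u - (v - η)) := by
        refine MeasureTheory.setIntegral_le_integral hlhs (Filter.Eventually.of_forall fun u => ?_)
        exact mul_nonneg (pnB_nonneg u) (pnK_nonneg hl _)
    _ ≤ ∫ u, (Real.exp (2 * η) * pnB v * pnK l (u - (v - η)) + D * (1 + (u - (v - η)) ^ 2)⁻¹) :=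
        MeasureTheory.integral_mono hlhs hi hpt
    _ = _ := by
        rw [MeasureTheory.integral_add (hiK.const_mul _) (hi1.const_mul D),
          MeasureTheory.integral_const_mul, MeasureTheory.integral_const_mul,
          MeasureTheory.integral_sub_right_eq_self (pnK l) (v - η), pnK_total hl,
          MeasureTheory.integral_sub_right_eq_self (fun u : ℝ => (1 + u ^ 2)⁻¹) (v - η),
          integral_univ_inv_one_add_sq]

open Filter Topology in
lemma pnB_lower {ε : ℝ} (hε : 0 < ε) : ∀ᶠ v in atTop, 1 - ε ≤ pnB v := by
  set κ := ∫ u, pnK 1 u with hκ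
  have hκ0 : 0 < κ := pnK_total_pos
  have hC := pnC_pos
  have hpi := Real.pi_pos
  set η := ε / 4 with hη
  have hη0 : 0 < η := by positivity
  set Q := pnC * (2 * (1 + 1 / η ^ 2)) * Real.pi with hQ
  have hQ0 : 0 < Q := by rw [hQ]; positivity
  set l := 4 * Q / (ε * κ) with hl
  have hl0 : 0 < l := by rw [hl]; positivity
  have hsh : Tendsto (fun v : ℝ => v - η) atTop atTop := tendsto_atTop_add_const_right _ (-η) tendsto_id
  have h1 := ((pn_RL hl0).comp hsh).eventually_const_le (show -(ε / 8 * κ) < 0 by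
    have : 0 < ε / 8 * κ := by positivity
    linarith)
  have h2 := ((pnK_half hl0).comp hsh).eventually_const_le (show κ - ε / 8 * κ < κ by
    have : 0 < ε / 8 * κ := by positivity
    linarith)
  filter_upwards [h1, h2] with v h1 h2
  simp only [Function.comp_apply] at h1 h2
  have hiK := ((pnK_int hl0).comp_sub_right (v - η)).integrableOn (s := Set.Ioi (0:ℝ))
  have hiB : MeasureTheory.IntegrableOn (fun u => (pnB u - 1) * pnK l (u - (v - η)))
      (Set.Ioi (0:ℝ)) := by
    refine MeasureTheory.Integrable.bdd_mul (c := pnC) hiK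
      (pnB_meas.sub measurable_const).aestronglyMeasurable ?_
    exact Filter.Eventually.of_forall fun u => pnB_abs u
  have e := MeasureTheory.integral_add hiB hiK
  have e2 : (∫ u in Set.Ioi (0:ℝ), ((pnB u - 1) * pnK l (u - (v - η)) + pnK l (u - (v - η)))) =
      ∫ u in Set.Ioi (0:ℝ), pnB u * pnK l (u - (v - η)) := by
    refine MeasureTheory.integral_congr_ae (Filter.Eventually.of_forall fun u => ?_)
    simp only; ring
  have hup := pn_upper hl0 hη0 v
  rw [← e2, e, ← hκ] at hup
  have hQl : pnC * (2 / l * (1 + 1 / η ^ 2)) * Real.pi = ε / 4 * κ := by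
    have : pnC * (2 / l * (1 + 1 / η ^ 2)) * Real.pi = Q / l := by rw [hQ]; ring
    rw [this, hl]; field_simp
  rw [hQl] at hup
  have hmain : κ * (1 - ε / 2) ≤ κ * (Real.exp (2 * η) * pnB v) := by linarith
  have hm2 := le_of_mul_le_mul_left hmain hκ0
  have hexp : Real.exp (-(2 * η)) * (1 - ε / 2) ≤ pnB v := by
    have := mul_le_mul_of_nonneg_left hm2 (Real.exp_pos (-(2 * η))).le
    rwa [← mul_assoc, ← Real.exp_add, neg_add_cancel, Real.exp_zero, one_mul] at this
  have h3 : 1 - ε / 2 ≤ Real.exp (-(2 * η)) := by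
    have := Real.add_one_le_exp (-(2 * η))
    rw [hη] at this ⊢
    linarith
  have h4 : Real.exp (-(2 * η)) ≤ 1 := by
    rw [Real.exp_le_one_iff]; linarith
  nlinarith

open Filter Topology in
lemma primePi_lower {ε : ℝ} (hε : 0 < ε) :
    ∀ᶠ x : ℝ in atTop, (1 - ε) * (x / Real.log x) ≤ (primePi x : ℝ) := by
  have h := Real.tendsto_log_atTop.eventually (pnB_lower hε)
  filter_upwards [h, eventually_gt_atTop (1:ℝ)] with x hx hx1
  have hx0 : 0 < x := by linarith
  have hlog := Real.log_pos hx1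
  unfold pnB at hx
  rw [Real.exp_neg, Real.exp_log hx0, ← div_eq_mul_inv, le_div_iff₀ hx0] at hx
  have h2 := Chebyshev.psi_le_primeCounting_mul_log' x
  have h3 : (primePi x : ℝ) = (Nat.primeCounting ⌊x⌋₊ : ℝ) := by
    unfold primePi
    rw [Nat.primeCounting, Nat.primeCounting', Nat.count_eq_card_filter_range]
  rw [h3, ← mul_div_assoc, div_le_iff₀ hlog]
  linarith


open Filter Topology in
theorem limsup_T_aux (c : ℝ) (hc1 : 8 / 9 ≤ c) (hc2 : c < 1) (ε : ℝ) (hε : 0 < ε) :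
    ∀ᶠ x : ℝ in atTop, (T c x : ℝ) ≤ (8 * (1 / c - 1) + ε) * (primePi x : ℝ) := by
  have hc0 : 0 < c := by linarith
  have hA : 0 ≤ 8 * (1 / c - 1) := by
    have : 1 ≤ 1 / c := by rw [one_le_div hc0]; exact hc2.le
    linarith
  set A := 8 * (1 / c - 1) with hAdef
  have hAε : 0 < A + ε := by linarith
  have hη : 0 < (ε / 2) / (A + ε) := by positivity
  filter_upwards [T_asymp c hc1 hc2 (ε / 2) (by linarith), primePi_lower hη] with x h1 h2
  have h3 := mul_le_mul_of_nonneg_left h2 hAε.le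
  have e : (A + ε) * ((1 - (ε / 2) / (A + ε)) * (x / Real.log x)) =
      (A + ε / 2) * (x / Real.log x) := by
    field_simp
    ring
  rw [e] at h3
  exact h1.trans h3


theorem limsup_T_div_pi_le (c : ℝ) (hc1 : 8 / 9 ≤ c) (hc2 : c < 1) :
    ∀ ε > 0, ∃ x₀ : ℝ, ∀ x ≥ x₀,
      (T c x : ℝ) ≤ (8 * (1 / c - 1) + ε) * (primePi x : ℝ) := by
  intro ε hε
  exact Filter.eventually_atTop.mp (limsup_T_aux c hc1 hc2 ε hε)
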